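/- arXiv:2506.05827 — 2 statements merged into one kernel-verified Lean document; each statement's English description precedes it below -/
import Mathlib

section
/- If d is not divisible by ℓ (where q is a primitive ℓ-th root of unity, ℓ > 1 odd, so that (d)_{q²} ≠ 0), then the quantum de Rham complex 0 → S_q^d(n) → S_q^{d−1}(n) ⊗ Λ_q^1(n) → ⋯ → Λ_q^d(n) → 0 is exact. -/
/-- Generators of the algebra `Ω(n) = S_q(V_n) ⊗ Λ_q(V_n)`: `Sum.inl i` stands for
`x_i = e_i ⊗ 1` (symmetric generator) and `Sum.inr i` for `y_i = 1 ⊗ e_i` (exterior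
generator). -/
abbrev OmegaLetter (n : ℕ) := Fin n ⊕ Fin n

/-- The defining relations of the algebra `Ω(n) = S_q(V_n) ⊗ Λ_q(V_n)` with product
twisted by the braiding (quantum de Rham algebra). -/
inductive omegaRel (K : Type*) [Field K] (q : K) (n : ℕ) :
    FreeAlgebra K (OmegaLetter n) → FreeAlgebra K (OmegaLetter n) → Prop
  | xx {i j : Fin n} (h : j < i) :
      omegaRel K q n (FreeAlgebra.ι K (Sum.inl i) * FreeAlgebra.ι K (Sum.inl j))
        (q • (FreeAlgebra.ι K (Sum.inl j) * FreeAlgebra.ι K (Sum.inl i)))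
  | yx_gt {i j : Fin n} (h : j < i) :
      omegaRel K q n (FreeAlgebra.ι K (Sum.inr j) * FreeAlgebra.ι K (Sum.inl i))
        (FreeAlgebra.ι K (Sum.inl i) * FreeAlgebra.ι K (Sum.inr j))
  | yx_eq (i : Fin n) :
      omegaRel K q n (FreeAlgebra.ι K (Sum.inr i) * FreeAlgebra.ι K (Sum.inl i))
        (q • (FreeAlgebra.ι K (Sum.inl i) * FreeAlgebra.ι K (Sum.inr i)))
  | yx_lt {i j : Fin n} (h : i < j) :
      omegaRel K q n (FreeAlgebra.ι K (Sum.inr j) * FreeAlgebra.ι K (Sum.inl i))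
        ((q - q⁻¹) • (FreeAlgebra.ι K (Sum.inl j) * FreeAlgebra.ι K (Sum.inr i)) +
          FreeAlgebra.ι K (Sum.inl i) * FreeAlgebra.ι K (Sum.inr j))
  | yy {i j : Fin n} (h : j < i) :
      omegaRel K q n (FreeAlgebra.ι K (Sum.inr i) * FreeAlgebra.ι K (Sum.inr j))
        ((-q⁻¹) • (FreeAlgebra.ι K (Sum.inr j) * FreeAlgebra.ι K (Sum.inr i)))
  | ysq (i : Fin n) :
      omegaRel K q n (FreeAlgebra.ι K (Sum.inr i) * FreeAlgebra.ι K (Sum.inr i)) 0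

/-- The algebra `Ω(n) = S_q(V_n) ⊗ Λ_q(V_n)` with braided product, presented by
generators and relations. -/
abbrev OmegaAlg (K : Type*) [Field K] (q : K) (n : ℕ) := RingQuot (omegaRel K q n)

namespace OmegaAlg

variable (K : Type*) [Field K] (q : K) (n : ℕ)

/-- The generators of `Ω(n)`. -/
noncomputable def gen (g : OmegaLetter n) : OmegaAlg K q n :=
  RingQuot.mkAlgHom K (omegaRel K q n) (FreeAlgebra.ι K g)

/-- The symmetric generator `x_i = e_i ⊗ 1`. -/
noncomputable def X (i : Fin n) : OmegaAlg K q n := gen K q n (Sum.inl i)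

/-- The exterior generator `y_i = 1 ⊗ e_i`. -/
noncomputable def Y (i : Fin n) : OmegaAlg K q n := gen K q n (Sum.inr i)

/-- The image in `Ω(n)` of a word in the generators. -/
noncomputable def wordProd (w : List (OmegaLetter n)) : OmegaAlg K q n :=
  (w.map (gen K q n)).prod

/-- The number of symmetric letters `x` in a word. -/
def countX (w : List (OmegaLetter n)) : ℕ := (w.filter Sum.isLeft).length

/-- The number of exterior letters `y` in a word. -/
def countY (w : List (OmegaLetter n)) : ℕ := (w.filter Sum.isRight).length

/-- The bigraded piece `Ω^i_d(n) = S_q^{d-i}(n) ⊗ Λ_q^i(n)`: the span of the words with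
`d` letters, `i` of which are exterior. -/
noncomputable def piece (i d : ℕ) : Submodule K (OmegaAlg K q n) :=
  Submodule.span K {a : OmegaAlg K q n | ∃ w : List (OmegaLetter n),
    w.length = d ∧ countY n w = i ∧ a = wordProd K q n w}

/-- The property that `δ` is the quantum de Rham differential: on the word monomials of
`Ω(n)` it deconcatenates one symmetric letter (with the appropriate braiding twist) and
multiplies it into the exterior factor, replacing one `x`-letter by the corresponding
`y`-letter. -/
def IsDeRham (δ : OmegaAlg K q n →ₗ[K] OmegaAlg K q n) : Prop :=
  ∀ w : List (OmegaLetter n),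
    δ (wordProd K q n w) =
      ∑ k : Fin w.length,
        Sum.elim
          (fun i : Fin n =>
            ((-q⁻¹) ^ countY n (w.take k) * q ^ countX n (w.drop (k + 1))) •
              wordProd K q n (w.set k (Sum.inr i)))
          (fun _ : Fin n => (0 : OmegaAlg K q n))
          (w.get k)

/-- The property that `κ` is the quantum Koszul differential: on the word monomials of
`Ω(n)` it deconcatenates one exterior letter (with the appropriate braiding twist) and
multiplies it into the symmetric factor, replacing one `y`-letter by the corresponding
`x`-letter. -/
def IsKoszul (κ : OmegaAlg K q n →ₗ[K] OmegaAlg K q n) : Prop :=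
  ∀ w : List (OmegaLetter n),
    κ (wordProd K q n w) =
      ∑ k : Fin w.length,
        Sum.elim
          (fun _ : Fin n => (0 : OmegaAlg K q n))
          (fun i : Fin n =>
            ((-q⁻¹) ^ countY n (w.take k) * q ^ countX n (w.drop (k + 1))) •
              wordProd K q n (w.set k (Sum.inl i)))
          (w.get k)

end OmegaAlg

namespace OmegaAlg

section helpers

variable {K : Type*} [Field K] {q : K} {n : ℕ}

lemma rel_eq {a b : FreeAlgebra K (OmegaLetter n)} (h : omegaRel K q n a b) :
    RingQuot.mkAlgHom K (omegaRel K q n) a = RingQuot.mkAlgHom K (omegaRel K q n) b :=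
  RingQuot.mkAlgHom_rel K h

lemma r_xx {i j : Fin n} (h : j < i) :
    X K q n i * X K q n j = q • (X K q n j * X K q n i) := by
  simpa [X, Y, gen] using rel_eq (omegaRel.xx (K := K) (q := q) h)

lemma r_yx_gt {i j : Fin n} (h : j < i) :
    Y K q n j * X K q n i = X K q n i * Y K q n j := by
  simpa [X, Y, gen] using rel_eq (omegaRel.yx_gt (K := K) (q := q) h)

lemma r_yx_eq (i : Fin n) :
    Y K q n i * X K q n i = q • (X K q n i * Y K q n i) := by
  simpa [X, Y, gen] using rel_eq (omegaRel.yx_eq (K := K) (q := q) i)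

lemma r_yx_lt {i j : Fin n} (h : i < j) :
    Y K q n j * X K q n i =
      (q - q⁻¹) • (X K q n j * Y K q n i) + X K q n i * Y K q n j := by
  have := rel_eq (omegaRel.yx_lt (K := K) (q := q) h)
  simp only [map_mul, map_add, map_smul] at this
  exact this

lemma r_yy {i j : Fin n} (h : j < i) :
    Y K q n i * Y K q n j = (-q⁻¹) • (Y K q n j * Y K q n i) := by
  have := rel_eq (omegaRel.yy (K := K) (q := q) h)
  simp only [map_mul, map_smul] at this
  exact this

lemma r_ysq (i : Fin n) : Y K q n i * Y K q n i = 0 := by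
  simpa [X, Y, gen] using rel_eq (omegaRel.ysq (K := K) (q := q) i)

variable (K q n) in
/-- The matrices of the generators for the simultaneous recursion of the
rescaling and of the Koszul map. -/
noncomputable def matGen : OmegaLetter n → Matrix (Fin 2) (Fin 2) (OmegaAlg K q n) :=
  Sum.elim (fun i => !![q • X K q n i, 0; 0, X K q n i])
    (fun i => !![Y K q n i, 0; X K q n i, (-q⁻¹) • Y K q n i])

lemma matGen_rel (hq0 : q ≠ 0) : ∀ ⦃a b : FreeAlgebra K (OmegaLetter n)⦄, omegaRel K q n a b →
    FreeAlgebra.lift K (matGen K q n) a = FreeAlgebra.lift K (matGen K q n) b := by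
  intro a b h
  cases h with
  | xx h =>
    simp only [map_mul, map_smul, FreeAlgebra.lift_ι_apply, matGen, Sum.elim_inl]
    ext s t
    fin_cases s <;> fin_cases t <;> simp [Matrix.mul_apply, Fin.sum_univ_two, r_xx h]
  | yx_gt h =>
    simp only [map_mul, map_smul, FreeAlgebra.lift_ι_apply, matGen, Sum.elim_inl, Sum.elim_inr]
    ext s t
    fin_cases s <;> fin_cases t <;>
      simp [Matrix.mul_apply, Fin.sum_univ_two, r_xx h, r_yx_gt h]
  | yx_eq i =>
    simp only [map_mul, map_smul, FreeAlgebra.lift_ι_apply, matGen, Sum.elim_inl, Sum.elim_inr]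
    ext s t
    fin_cases s <;> fin_cases t <;>
      simp [Matrix.mul_apply, Fin.sum_univ_two, r_yx_eq, hq0, smul_smul]
  | yx_lt h =>
    simp only [map_mul, map_add, map_smul, FreeAlgebra.lift_ι_apply, matGen, Sum.elim_inl,
      Sum.elim_inr]
    ext s t
    fin_cases s <;> fin_cases t <;>
      simp [Matrix.mul_apply, Fin.sum_univ_two, r_xx h, r_yx_lt h, smul_smul] <;>
      match_scalars <;> field_simp <;> ring
  | yy h =>
    simp only [map_mul, map_smul, FreeAlgebra.lift_ι_apply, matGen, Sum.elim_inr]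
    ext s t
    fin_cases s <;> fin_cases t <;>
      simp [Matrix.mul_apply, Fin.sum_univ_two, r_yy h, r_yx_gt h, r_yx_lt h, smul_smul] <;>
      match_scalars <;> field_simp <;> ring
  | ysq i =>
    simp only [map_mul, map_zero, FreeAlgebra.lift_ι_apply, matGen, Sum.elim_inr]
    ext s t
    fin_cases s <;> fin_cases t <;>
      simp [Matrix.mul_apply, Fin.sum_univ_two, r_ysq, r_yx_eq, smul_smul, hq0]

/-- The matrix representation. -/
noncomputable def mat (hq0 : q ≠ 0) : OmegaAlg K q n →ₐ[K] Matrix (Fin 2) (Fin 2) (OmegaAlg K q n) :=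
  RingQuot.liftAlgHom K ⟨FreeAlgebra.lift K (matGen K q n), matGen_rel hq0⟩

lemma mat_gen (hq0 : q ≠ 0) (g : OmegaLetter n) :
    mat hq0 (gen K q n g) = matGen K q n g := by
  simp [mat, gen]

lemma ind {P : OmegaAlg K q n → Prop} (h1 : P 1) (hadd : ∀ a b, P a → P b → P (a + b))
    (hsmul : ∀ (c : K) a, P a → P (c • a))
    (hx : ∀ i a, P a → P (X K q n i * a)) (hy : ∀ i a, P a → P (Y K q n i * a)) :
    ∀ a, P a := by
  have key : ∀ f : FreeAlgebra K (OmegaLetter n), ∀ b, P b →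
      P (RingQuot.mkAlgHom K (omegaRel K q n) f * b) := by
    intro f
    induction f using FreeAlgebra.induction with
    | grade0 r =>
      intro b hb
      rw [AlgHom.commutes, ← Algebra.smul_def]
      exact hsmul _ _ hb
    | grade1 g =>
      intro b hb
      cases g with
      | inl i => exact hx i b hb
      | inr i => exact hy i b hb
    | mul f g hf hg =>
      intro b hb
      rw [map_mul, mul_assoc]
      exact hf _ (hg _ hb)
    | add f g hf hg =>
      intro b hb
      rw [map_add, add_mul]
      exact hadd _ _ (hf _ hb) (hg _ hb)
  intro a
  obtain ⟨f, rfl⟩ := RingQuot.mkAlgHom_surjective K (omegaRel K q n) a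
  simpa using key f 1 h1

/-- The rescaling map. -/
noncomputable def sig (hq0 : q ≠ 0) : OmegaAlg K q n →ₗ[K] OmegaAlg K q n where
  toFun a := mat hq0 a 0 0
  map_add' a b := by simp
  map_smul' c a := by simp

/-- The Koszul map. -/
noncomputable def kap (hq0 : q ≠ 0) : OmegaAlg K q n →ₗ[K] OmegaAlg K q n where
  toFun a := mat hq0 a 1 0
  map_add' a b := by simp
  map_smul' c a := by simp

variable (hq0 : q ≠ 0)

lemma sig_one : sig hq0 (1 : OmegaAlg K q n) = 1 := by simp [sig]

lemma kap_one : kap hq0 (1 : OmegaAlg K q n) = 0 := by simp [kap]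

lemma sig_X (i : Fin n) (a) : sig hq0 (X K q n i * a) = q • (X K q n i * sig hq0 a) := by
  simp [sig, X, mat_gen, matGen, Matrix.mul_apply, Fin.sum_univ_two]

lemma sig_Y (i : Fin n) (a) : sig hq0 (Y K q n i * a) = Y K q n i * sig hq0 a := by
  simp [sig, Y, mat_gen, matGen, Matrix.mul_apply, Fin.sum_univ_two]

lemma kap_X (i : Fin n) (a) : kap hq0 (X K q n i * a) = X K q n i * kap hq0 a := by
  simp [kap, X, mat_gen, matGen, Matrix.mul_apply, Fin.sum_univ_two]

lemma kap_Y (i : Fin n) (a) : kap hq0 (Y K q n i * a) =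
    X K q n i * sig hq0 a + (-q⁻¹) • (Y K q n i * kap hq0 a) := by
  simp [kap, sig, X, Y, mat_gen, matGen, Matrix.mul_apply, Fin.sum_univ_two]

lemma sig_kap (a : OmegaAlg K q n) : sig hq0 (kap hq0 a) = q • kap hq0 (sig hq0 a) := by
  induction a using ind with
  | h1 => simp [kap_one, sig_one]
  | hadd a b ha hb => simp [ha, hb]
  | hsmul c a ha => simp [ha, smul_comm c q]
  | hx i a ha => simp [sig_X, kap_X, ha]
  | hy i a ha =>
    simp only [sig_X, sig_Y, kap_Y, map_add, map_smul, ha, mul_smul_comm]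
    match_scalars <;> ring

lemma wp_nil : wordProd K q n [] = 1 := by simp [wordProd]

lemma wp_X (i : Fin n) (w) : wordProd K q n (Sum.inl i :: w) = X K q n i * wordProd K q n w := by
  simp [wordProd, X]

lemma wp_Y (i : Fin n) (w) : wordProd K q n (Sum.inr i :: w) = Y K q n i * wordProd K q n w := by
  simp [wordProd, Y]

lemma cX_X (i : Fin n) (w) : countX n (Sum.inl i :: w) = countX n w + 1 := rfl
lemma cX_Y (i : Fin n) (w) : countX n (Sum.inr i :: w) = countX n w := by simp [countX]
lemma cY_X (i : Fin n) (w) : countY n (Sum.inl i :: w) = countY n w := by simp [countY]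
lemma cY_Y (i : Fin n) (w) : countY n (Sum.inr i :: w) = countY n w + 1 := rfl

lemma sig_wp (w) : sig hq0 (wordProd K q n w) = q ^ countX n w • wordProd K q n w := by
  induction w with
  | nil => simp [wp_nil, sig_one, countX]
  | cons g w ih =>
    cases g with
    | inl i => simp [wp_X, sig_X, ih, cX_X, smul_smul, pow_succ']
    | inr i => simp [wp_Y, sig_Y, ih, cX_Y]

lemma mem_words (a : OmegaAlg K q n) : a ∈ Submodule.span K (Set.range (wordProd K q n)) := by
  have aux : ∀ g b, b ∈ Submodule.span K (Set.range (wordProd K q n)) →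
      gen K q n g * b ∈ Submodule.span K (Set.range (wordProd K q n)) := by
    intro g b hb
    induction hb using Submodule.span_induction with
    | mem b hb =>
      obtain ⟨w, rfl⟩ := hb
      exact Submodule.subset_span ⟨g :: w, by simp [wordProd]⟩
    | zero => simp
    | add a b _ _ ha hb => rw [mul_add]; exact add_mem ha hb
    | smul c a _ ha => rw [mul_smul_comm]; exact Submodule.smul_mem _ _ ha
  induction a using ind with
  | h1 => exact Submodule.subset_span ⟨[], wp_nil⟩
  | hadd a b ha hb => exact add_mem ha hb
  | hsmul c a ha => exact Submodule.smul_mem _ _ ha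
  | hx i a ha => exact aux _ _ ha
  | hy i a ha => exact aux _ _ ha

variable {δ : OmegaAlg K q n →ₗ[K] OmegaAlg K q n} (hδ : IsDeRham K q n δ)

include hδ

lemma del_one : δ 1 = 0 := by
  have := hδ []
  simpa [wp_nil] using this

lemma del_X (i : Fin n) (a) : δ (X K q n i * a) = Y K q n i * sig hq0 a + X K q n i * δ a := by
  induction mem_words a using Submodule.span_induction with
  | mem b hb =>
    obtain ⟨w, rfl⟩ := hb
    rw [← wp_X, hδ, hδ w, sig_wp, Finset.mul_sum]
    refine (Fin.sum_univ_succ _).trans ?_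
    congr 1
    · simp [countY, wp_Y]
    · refine Finset.sum_congr rfl fun k _ => ?_
      simp only [List.get_eq_getElem, Fin.val_succ, List.getElem_cons_succ, List.take_succ_cons,
        List.drop_succ_cons, List.set_cons_succ, cY_X, wp_X]
      cases w[(k : ℕ)] <;> simp
  | zero => simp
  | add a b _ _ ha hb => simp only [mul_add, map_add, ha, hb]; abel
  | smul c a _ ha => simp only [mul_smul_comm, map_smul, ha, smul_add]

lemma del_Y (i : Fin n) (a) : δ (Y K q n i * a) = (-q⁻¹) • (Y K q n i * δ a) := by
  induction mem_words a using Submodule.span_induction with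
  | mem b hb =>
    obtain ⟨w, rfl⟩ := hb
    rw [← wp_Y, hδ, hδ w, Finset.mul_sum, Finset.smul_sum]
    refine (Fin.sum_univ_succ _).trans ?_
    refine (add_eq_right.2 ?_).trans ?_
    · simp
    · refine Finset.sum_congr rfl fun k _ => ?_
      simp only [List.get_eq_getElem, Fin.val_succ, List.getElem_cons_succ, List.take_succ_cons,
        List.drop_succ_cons, List.set_cons_succ, cY_Y, wp_Y]
      cases w[(k : ℕ)]
      · simp only [Sum.elim_inl, mul_smul_comm, smul_smul]
        congr 1
        ring
      · simp
  | zero => simp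
  | add a b _ _ ha hb => simp only [mul_add, map_add, ha, hb, smul_add]
  | smul c a _ ha => simp only [mul_smul_comm, map_smul, ha]; rw [smul_comm]

lemma del_sig (a : OmegaAlg K q n) : δ (sig hq0 a) = q • sig hq0 (δ a) := by
  induction a using ind with
  | h1 => simp [del_one hδ, sig_one]
  | hadd a b ha hb => simp [ha, hb]
  | hsmul c a ha => simp [ha, smul_comm c q]
  | hx i a ha => simp [sig_X, sig_Y, del_X hq0 hδ, ha]
  | hy i a ha =>
    simp only [sig_Y, del_Y hδ, map_smul, ha, mul_smul_comm]
    match_scalars <;> ring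

/-- The homotopy operator. -/
lemma homot_X (i : Fin n) (a) :
    kap hq0 (δ (X K q n i * a)) + (q⁻¹ ^ 2) • δ (kap hq0 (X K q n i * a)) =
      X K q n i * sig hq0 (sig hq0 a)
        + X K q n i * (kap hq0 (δ a) + (q⁻¹ ^ 2) • δ (kap hq0 a)) := by
  simp only [del_X hq0 hδ, kap_X, kap_Y, map_add, sig_kap, mul_add, mul_smul_comm]
  match_scalars <;> field_simp <;> ring

lemma homot_Y (i : Fin n) (a) :
    kap hq0 (δ (Y K q n i * a)) + (q⁻¹ ^ 2) • δ (kap hq0 (Y K q n i * a)) =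
      (q⁻¹ ^ 2) • (Y K q n i * sig hq0 (sig hq0 a))
        + (q⁻¹ ^ 2) • (Y K q n i * (kap hq0 (δ a) + (q⁻¹ ^ 2) • δ (kap hq0 a))) := by
  simp only [del_X hq0 hδ, del_Y hδ, kap_X, kap_Y, map_add, map_smul, del_sig hq0 hδ, mul_add,
    mul_smul_comm]
  match_scalars <;> field_simp <;> ring

lemma homot_wp (w : List (OmegaLetter n)) :
    kap hq0 (δ (wordProd K q n w)) + (q⁻¹ ^ 2) • δ (kap hq0 (wordProd K q n w)) =
      ((q⁻¹ ^ 2) ^ countY n w * ∑ t ∈ Finset.range w.length, (q ^ 2) ^ t) • wordProd K q n w := by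
  have hlen : ∀ w : List (OmegaLetter n), w.length = countX n w + countY n w := by
    intro w
    induction w with
    | nil => simp [countX, countY]
    | cons g w ih =>
      cases g <;> simp only [cX_X, cX_Y, cY_X, cY_Y, List.length_cons, ih] <;> omega
  induction w with
  | nil => simp [wp_nil, del_one hδ, kap_one]
  | cons g w ih =>
    cases g with
    | inl i =>
      rw [wp_X, homot_X hq0 hδ, ih, sig_wp, map_smul, sig_wp, cY_X, List.length_cons,
        Finset.sum_range_succ]
      conv_rhs => rw [hlen w]
      rw [← hlen w]
      simp only [mul_smul_comm, smul_smul]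
      rw [← add_smul]
      congr 1
      have : (q⁻¹ ^ 2) ^ countY n w * (q ^ 2) ^ countY n w = 1 := by
        rw [← mul_pow, ← mul_pow, inv_mul_cancel₀ hq0]; simp
      rw [hlen w, pow_add (q ^ 2)]
      linear_combination (-(q ^ 2) ^ countX n w) * this
    | inr i =>
      rw [wp_Y, homot_Y hq0 hδ, ih, sig_wp, map_smul, sig_wp, cY_Y, List.length_cons,
        Finset.sum_range_succ]
      simp only [mul_smul_comm, smul_smul]
      rw [← add_smul]
      congr 1
      have : (q⁻¹ ^ 2) ^ countY n w * (q ^ 2) ^ countY n w = 1 := by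
        rw [← mul_pow, ← mul_pow, inv_mul_cancel₀ hq0]; simp
      rw [hlen w, pow_add (q ^ 2)]
      linear_combination (-(q⁻¹ ^ 2) * (q ^ 2) ^ countX n w) * this

lemma homot {i d : ℕ} {a} (ha : a ∈ piece K q n i d) :
    kap hq0 (δ a) + (q⁻¹ ^ 2) • δ (kap hq0 a) =
      ((q⁻¹ ^ 2) ^ i * ∑ t ∈ Finset.range d, (q ^ 2) ^ t) • a := by
  induction ha using Submodule.span_induction with
  | mem b hb =>
    obtain ⟨w, rfl, rfl, rfl⟩ := hb
    exact homot_wp hq0 hδ w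
  | zero => simp
  | add a b _ _ ha hb =>
    rw [smul_add, ← ha, ← hb]
    simp only [map_add, smul_add]
    abel
  | smul c a _ ha =>
    rw [smul_comm, ← ha]
    simp only [map_smul, smul_add]
    rw [smul_comm c]

omit hδ

lemma gen_mem {i d : ℕ} {a} (ha : a ∈ piece K q n i d) (g : OmegaLetter n) :
    gen K q n g * a ∈ piece K q n (i + countY n [g]) (d + 1) := by
  induction ha using Submodule.span_induction with
  | mem b hb =>
    obtain ⟨w, rfl, rfl, rfl⟩ := hb
    refine Submodule.subset_span ⟨g :: w, by simp, ?_, by simp [wordProd]⟩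
    cases g <;> rfl
  | zero => simp
  | add a b _ _ ha hb => rw [mul_add]; exact add_mem ha hb
  | smul c a _ ha => rw [mul_smul_comm]; exact Submodule.smul_mem _ _ ha

lemma kap_wp (w : List (OmegaLetter n)) :
    (countY n w = 0 → kap hq0 (wordProd K q n w) = 0) ∧
    ∀ i, countY n w = i + 1 → kap hq0 (wordProd K q n w) ∈ piece K q n i w.length := by
  induction w with
  | nil => simp [wp_nil, kap_one]
  | cons g w ih =>
    cases g with
    | inl j =>
      rw [cY_X, wp_X, kap_X]
      refine ⟨fun h => by simp [ih.1 h], fun i h => ?_⟩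
      exact gen_mem (ih.2 i h) (Sum.inl j)
    | inr j =>
      rw [cY_Y, wp_Y, kap_Y, sig_wp]
      refine ⟨fun h => by omega, fun i h => ?_⟩
      obtain rfl : countY n w = i := by omega
      refine add_mem ?_ (Submodule.smul_mem _ _ ?_)
      · rw [mul_smul_comm]
        exact Submodule.smul_mem _ _
          (gen_mem (Submodule.subset_span ⟨w, rfl, rfl, rfl⟩) (Sum.inl j))
      · rcases hc : countY n w with _ | m
        · simp [ih.1 hc]
        · exact gen_mem (ih.2 m hc) (Sum.inr j)

lemma kap_zero {d : ℕ} {a} (ha : a ∈ piece K q n 0 d) : kap hq0 a = 0 := by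
  induction ha using Submodule.span_induction with
  | mem b hb =>
    obtain ⟨w, rfl, h, rfl⟩ := hb
    exact (kap_wp hq0 w).1 h
  | zero => simp
  | add a b _ _ ha hb => simp [ha, hb]
  | smul c a _ ha => simp [ha]

lemma kap_mem {i d : ℕ} {a} (ha : a ∈ piece K q n (i + 1) d) : kap hq0 a ∈ piece K q n i d := by
  induction ha using Submodule.span_induction with
  | mem b hb =>
    obtain ⟨w, rfl, h, rfl⟩ := hb
    exact (kap_wp hq0 w).2 i h
  | zero => simp
  | add a b _ _ ha hb => rw [map_add]; exact add_mem ha hb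
  | smul c a _ ha => rw [map_smul]; exact Submodule.smul_mem _ _ ha

end helpers

end OmegaAlg

/-- If `d` is not divisible by `ℓ` (where `q` is a primitive `ℓ`-th
root of unity, `ℓ > 1` odd, so that `(d)_{q²} ≠ 0`), then the quantum de Rham complex
`0 → S_q^d(n) → S_q^{d−1}(n) ⊗ Λ_q^1(n) → ⋯ → Λ_q^d(n) → 0` is exact: the
differential `δ` is injective on `Ω^0_d(n)`, and every cocycle in `Ω^{i+1}_d(n)` is a
coboundary. -/
theorem stmt11 (K : Type*) [Field K] (q : K) (ℓ : ℕ) (hℓ : 1 < ℓ) (hodd : Odd ℓ)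
    (hq : IsPrimitiveRoot q ℓ) (n d : ℕ) (hd : ¬ (ℓ ∣ d))
    (δ : OmegaAlg K q n →ₗ[K] OmegaAlg K q n) (hδ : OmegaAlg.IsDeRham K q n δ) :
    (∀ a ∈ OmegaAlg.piece K q n 0 d, δ a = 0 → a = 0) ∧
    ∀ i : ℕ, ∀ a ∈ OmegaAlg.piece K q n (i + 1) d, δ a = 0 →
      ∃ b ∈ OmegaAlg.piece K q n i d, δ b = a := by
  have hq0 : q ≠ 0 := hq.ne_zero (by omega)
  have hs : ∑ t ∈ Finset.range d, (q ^ 2) ^ t ≠ 0 := by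
    intro h0
    have h1 := geom_sum_mul (q ^ 2) d
    rw [h0, zero_mul, eq_comm, sub_eq_zero, ← pow_mul, hq.pow_eq_one_iff_dvd] at h1
    exact hd ((Nat.Coprime.dvd_mul_left
      (Nat.Coprime.symm (Nat.coprime_two_left.2 hodd))).1 h1)
  have hc : ∀ i : ℕ, (q⁻¹ ^ 2) ^ i * ∑ t ∈ Finset.range d, (q ^ 2) ^ t ≠ 0 := fun i =>
    mul_ne_zero (pow_ne_zero _ (pow_ne_zero _ (inv_ne_zero hq0))) hs
  refine ⟨fun a ha h => ?_, fun i a ha h => ?_⟩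
  · have := OmegaAlg.homot hq0 hδ ha
    rw [h, OmegaAlg.kap_zero hq0 ha, map_zero, map_zero, smul_zero, add_zero, eq_comm] at this
    exact (smul_eq_zero.1 this).resolve_left (hc 0)
  · have := OmegaAlg.homot hq0 hδ ha
    rw [h, map_zero, zero_add] at this
    refine ⟨((q⁻¹ ^ 2) ^ (i + 1) * ∑ t ∈ Finset.range d, (q ^ 2) ^ t)⁻¹ • (q⁻¹ ^ 2) •
      OmegaAlg.kap hq0 a, Submodule.smul_mem _ _ (Submodule.smul_mem _ _
        (OmegaAlg.kap_mem hq0 ha)), ?_⟩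
    rw [map_smul, map_smul, this, smul_smul, inv_mul_cancel₀ (hc _), one_smul]
end

section
/- Let q be a primitive ℓ-th root of unity, ℓ > 1 odd. The map sending e_i ⊗ 1 ↦ [e_i^ℓ ⊗ 1] and 1 ⊗ e_i ↦ [e_i^{ℓ−1} ⊗ e_i] defines an isomorphism of bigraded algebras from the classical algebra S(V_n) ⊗ Λ(V_n) onto the cohomology H•(Ω(n)) of the quantum de Rham complex (quantum Cartier isomorphism). -/
namespace QC

open OmegaAlg

section
variable {K : Type*} [Field K] {q : K} {n : ℕ}

lemma X_X {i j : Fin n} (h : j < i) :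
    X K q n i * X K q n j = q • (X K q n j * X K q n i) := by
  simpa [X, gen, map_mul, map_smul] using RingQuot.mkAlgHom_rel K (omegaRel.xx (K := K) (q := q) h)

lemma Y_X_gt {i j : Fin n} (h : j < i) :
    Y K q n j * X K q n i = X K q n i * Y K q n j := by
  simpa [X, Y, gen, map_mul, map_smul] using
    RingQuot.mkAlgHom_rel K (omegaRel.yx_gt (K := K) (q := q) h)

lemma Y_X_eq (i : Fin n) :
    Y K q n i * X K q n i = q • (X K q n i * Y K q n i) := by
  simpa [X, Y, gen, map_mul, map_smul] using
    RingQuot.mkAlgHom_rel K (omegaRel.yx_eq (K := K) (q := q) i)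

lemma Y_X_lt {i j : Fin n} (h : i < j) :
    Y K q n j * X K q n i = (q - q⁻¹) • (X K q n j * Y K q n i) + X K q n i * Y K q n j := by
  have := RingQuot.mkAlgHom_rel K (omegaRel.yx_lt (K := K) (q := q) h)
  rw [map_add, map_smul, map_mul, map_mul, map_mul] at this
  exact this

lemma Y_Y {i j : Fin n} (h : j < i) :
    Y K q n i * Y K q n j = (-q⁻¹) • (Y K q n j * Y K q n i) := by
  have := RingQuot.mkAlgHom_rel K (omegaRel.yy (K := K) (q := q) h)
  rw [map_smul, map_mul, map_mul] at this
  exact this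

lemma Y_sq (i : Fin n) : Y K q n i * Y K q n i = 0 := by
  simpa [X, Y, gen, map_mul, map_smul] using
    RingQuot.mkAlgHom_rel K (omegaRel.ysq (K := K) (q := q) i)

lemma Y_sq' (i : Fin n) (z : OmegaAlg K q n) : Y K q n i * (Y K q n i * z) = 0 := by
  rw [← mul_assoc, Y_sq, zero_mul]

/-- `q²`-integers. -/
def qint (q : K) (a : ℕ) : K := ∑ t ∈ Finset.range a, (q ^ 2) ^ t

lemma qint_succ (a : ℕ) : qint q (a + 1) = qint q a + (q ^ 2) ^ a := by
  simp [qint, Finset.sum_range_succ]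

lemma qint_succ' (a : ℕ) : qint q (a + 1) = q ^ 2 * qint q a + 1 := by
  simp [qint, Finset.sum_range_succ', Finset.mul_sum, pow_succ']

lemma qint_zero : qint q 0 = 0 := by simp [qint]

/-- one-variable monomials -/
noncomputable def blk (q : K) (i : Fin n) (p : ℕ × Bool) : OmegaAlg K q n :=
  X K q n i ^ p.1 * (if p.2 then Y K q n i else 1)

lemma X_Xpow_gt {i j : Fin n} (h : i < j) (a : ℕ) :
    X K q n j * X K q n i ^ a = q ^ a • (X K q n i ^ a * X K q n j) := by
  induction a with
  | zero => simp
  | succ a ih =>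
    rw [pow_succ, ← mul_assoc, ih, smul_mul_assoc, mul_assoc, X_X h, mul_smul_comm, smul_smul,
      mul_assoc, pow_succ]

lemma Y_Xpow_eq (i : Fin n) (a : ℕ) :
    Y K q n i * X K q n i ^ a = q ^ a • (X K q n i ^ a * Y K q n i) := by
  induction a with
  | zero => simp
  | succ a ih =>
    rw [pow_succ, ← mul_assoc, ih, smul_mul_assoc, mul_assoc, Y_X_eq, mul_smul_comm, smul_smul,
      mul_assoc, pow_succ]

lemma Y_Xpow_gt {i j : Fin n} (h : j < i) (a : ℕ) :
    Y K q n j * X K q n i ^ a = X K q n i ^ a * Y K q n j := by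
  induction a with
  | zero => simp
  | succ a ih =>
    rw [pow_succ, ← mul_assoc, ih, mul_assoc, Y_X_gt h, mul_assoc]

lemma Y_Xpow_lt {i j : Fin n} (h : i < j) (a : ℕ) :
    Y K q n j * X K q n i ^ a = X K q n i ^ a * Y K q n j +
      ((q - q⁻¹) * qint q a) • (X K q n i ^ (a - 1) * (Y K q n i * X K q n j)) := by
  induction a with
  | zero => simp [qint]
  | succ a ih =>
    have h1 : X K q n i ^ (a + 1 - 1) * (Y K q n i * X K q n j) =
      X K q n i ^ a * (Y K q n i * X K q n j) := by simp
    rw [h1]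
    have h2 : X K q n i ^ (a - 1) * (Y K q n i * X K q n j) * X K q n i =
       (q ^ 2 : K) • (X K q n i ^ (a - 1) * X K q n i * (Y K q n i * X K q n j)) := by
      rw [mul_assoc, mul_assoc (Y K q n i), X_X h, mul_smul_comm, ← mul_assoc (Y K q n i), Y_X_eq,
        smul_mul_assoc, smul_smul, mul_smul_comm, ← pow_two]
      simp only [mul_assoc]
    rw [pow_succ, ← mul_assoc, ih, add_mul, mul_assoc, Y_X_lt h, smul_mul_assoc, h2, mul_add,
      mul_smul_comm, ← Y_X_gt h]
    rcases a with _ | a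
    · simp [qint]; rw [add_comm]
    · rw [show a + 1 - 1 = a from rfl, ← pow_succ, smul_smul, qint_succ' (a + 1),
        mul_assoc (X K q n i ^ (a + 1))]
      module

lemma X_blk_lt {i j : Fin n} (h : i < j) (p : ℕ × Bool) :
    X K q n j * blk q i p = q ^ p.1 • (blk q i p * X K q n j) := by
  rcases p with ⟨a, _ | _⟩
  · simp [blk, X_Xpow_gt h]
  · simp only [blk, if_true]
    rw [← mul_assoc, X_Xpow_gt h, smul_mul_assoc, mul_assoc, ← Y_X_gt h, mul_assoc]

lemma X_blk_eq (j : Fin n) (p : ℕ × Bool) :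
    X K q n j * blk q j p = blk q j (p.1 + 1, p.2) := by
  simp [blk, pow_succ', mul_assoc]

lemma Y_blk_lt_true {i j : Fin n} (h : i < j) (a : ℕ) :
    Y K q n j * blk q i (a, true) = (-q⁻¹) • (blk q i (a, true) * Y K q n j) := by
  simp only [blk, if_true]
  rw [← mul_assoc, Y_Xpow_lt h, add_mul, mul_assoc, Y_Y h, smul_mul_assoc, mul_assoc _ _ (Y K q n i),
    mul_assoc (Y K q n i) _ (Y K q n i), ← Y_X_gt h, Y_sq', mul_smul_comm, mul_assoc]
  simp

lemma Y_blk_lt_false {i j : Fin n} (h : i < j) (a : ℕ) :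
    Y K q n j * blk q i (a, false) = blk q i (a, false) * Y K q n j +
      ((q - q⁻¹) * qint q a) • (blk q i (a - 1, true) * X K q n j) := by
  simp [blk, Y_Xpow_lt h, mul_assoc]

lemma Y_blk_eq_true (j : Fin n) (a : ℕ) :
    Y K q n j * blk q j (a, true) = 0 := by
  simp [blk, ← mul_assoc, Y_Xpow_eq]
  simp [mul_assoc, Y_sq]

lemma Y_blk_eq_false (j : Fin n) (a : ℕ) :
    Y K q n j * blk q j (a, false) = q ^ a • blk q j (a, true) := by
  simp [blk, Y_Xpow_eq]

/-- ordered monomials -/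
noncomputable def E (q : K) (l : List (Fin n)) (m : Fin n → ℕ × Bool) : OmegaAlg K q n :=
  (l.map fun i => blk q i (m i)).prod

lemma E_nil (m : Fin n → ℕ × Bool) : E q [] m = 1 := rfl

lemma E_cons (i : Fin n) (l : List (Fin n)) (m : Fin n → ℕ × Bool) :
    E q (i :: l) m = blk q i (m i) * E q l m := by simp [E]

lemma E_congr {l : List (Fin n)} {m m' : Fin n → ℕ × Bool} (h : ∀ i ∈ l, m i = m' i) :
    E q l m = E q l m' := by
  unfold E; congr 1; exact List.map_congr_left fun i hi => by rw [h i hi]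

lemma E_cons_update {i : Fin n} {l : List (Fin n)} (hi : i ∉ l) (m : Fin n → ℕ × Bool)
    (p : ℕ × Bool) : blk q i p * E q l m = E q (i :: l) (Function.update m i p) := by
  rw [E_cons, Function.update_self]
  congr 1
  apply E_congr
  intro j hj
  rw [Function.update_of_ne (by rintro rfl; exact hi hj)]

/-- weight of a one-variable monomial -/
def wt (p : ℕ × Bool) : ℕ := p.1 + p.2.toNat

/-- bidegree-`(r, d)` ordered monomials -/
def mons (q : K) (l : List (Fin n)) (r d : ℕ) : Submodule K (OmegaAlg K q n) :=
  Submodule.span K {z | ∃ m : Fin n → ℕ × Bool, (l.map fun i => (m i).2.toNat).sum = r ∧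
    (l.map fun i => wt (m i)).sum = d ∧ z = E q l m}

lemma blk_mul_mons {i : Fin n} {l : List (Fin n)} (hi : i ∉ l) (p : ℕ × Bool) {r d : ℕ}
    {z : OmegaAlg K q n} (hz : z ∈ mons q l r d) :
    blk q i p * z ∈ mons q (i :: l) (p.2.toNat + r) (wt p + d) := by
  unfold mons at hz
  induction hz using Submodule.span_induction with
  | zero => simp
  | add x y _ _ hx hy => rw [mul_add]; exact add_mem hx hy
  | smul c x _ hx => rw [mul_smul_comm]; exact Submodule.smul_mem _ _ hx
  | mem x hx =>
    obtain ⟨m, rfl, rfl, rfl⟩ := hx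
    refine Submodule.subset_span ⟨Function.update m i p, ?_, ?_, E_cons_update hi m p⟩
    · simp only [List.map_cons, List.sum_cons, Function.update_self]
      congr 2
      exact List.map_congr_left fun j hj => by
        rw [Function.update_of_ne (by rintro rfl; exact hi hj)]
    · simp only [List.map_cons, List.sum_cons, Function.update_self]
      congr 2
      exact List.map_congr_left fun j hj => by
        rw [Function.update_of_ne (by rintro rfl; exact hi hj)]

lemma mons_cast {l : List (Fin n)} {r d r' d' : ℕ} {z : OmegaAlg K q n} (hz : z ∈ mons q l r d)
    (hr : r = r') (hd : d = d') : z ∈ mons q l r' d' := by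
  subst hr hd; exact hz

lemma E_mem_mons (l : List (Fin n)) (m : Fin n → ℕ × Bool) :
    E q l m ∈ mons q l (l.map fun i => (m i).2.toNat).sum (l.map fun i => wt (m i)).sum :=
  Submodule.subset_span ⟨m, rfl, rfl, rfl⟩

lemma XY_E (l : List (Fin n)) (hl : l.Pairwise (· < ·)) (j : Fin n) (hj : j ∈ l)
    (m : Fin n → ℕ × Bool) :
    X K q n j * E q l m ∈ mons q l (l.map fun i => (m i).2.toNat).sum
      ((l.map fun i => wt (m i)).sum + 1) ∧
    Y K q n j * E q l m ∈ mons q l ((l.map fun i => (m i).2.toNat).sum + 1)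
      ((l.map fun i => wt (m i)).sum + 1) := by
  induction l with
  | nil => simp at hj
  | cons i l ih =>
    rw [List.pairwise_cons] at hl
    have hi : i ∉ l := fun h => lt_irrefl _ (hl.1 i h)
    rw [E_cons]
    simp only [List.map_cons, List.sum_cons, ← mul_assoc]
    rcases List.mem_cons.1 hj with rfl | hj'
    · constructor
      · rw [X_blk_eq]
        refine mons_cast (blk_mul_mons hi _ (E_mem_mons l m)) rfl ?_
        simp only [wt]; omega
      · rcases hp : m j with ⟨a, _ | _⟩
        · rw [Y_blk_eq_false, smul_mul_assoc]
          apply Submodule.smul_mem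
          refine mons_cast (blk_mul_mons hi _ (E_mem_mons l m)) ?_ ?_ <;> simp only [wt, Bool.toNat_true, Bool.toNat_false, hp] <;> omega
        · rw [Y_blk_eq_true]; simp
    · have hij := hl.1 j hj'
      obtain ⟨ihX, ihY⟩ := ih hl.2 hj'
      constructor
      · rw [X_blk_lt hij, smul_mul_assoc, mul_assoc]
        apply Submodule.smul_mem
        refine mons_cast (blk_mul_mons hi _ ihX) ?_ ?_ <;> omega
      · rcases hp : m i with ⟨a, _ | _⟩
        · rw [Y_blk_lt_false hij, add_mul, smul_mul_assoc, mul_assoc, mul_assoc]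
          refine add_mem ?_ ?_
          · refine mons_cast (blk_mul_mons hi _ ihY) ?_ ?_ <;> simp only [wt, Bool.toNat_true, Bool.toNat_false, hp] <;> omega
          · rcases a with _ | a
            · simp [qint]
            apply Submodule.smul_mem
            refine mons_cast (blk_mul_mons hi _ ihX) ?_ ?_ <;> simp only [wt, Nat.add_sub_cancel, Bool.toNat_true, Bool.toNat_false, hp] <;> omega
        · rw [Y_blk_lt_true hij, smul_mul_assoc, mul_assoc]
          apply Submodule.smul_mem
          refine mons_cast (blk_mul_mons hi _ ihY) ?_ ?_ <;> simp only [wt, Bool.toNat_true, Bool.toNat_false, hp] <;> omega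

lemma X_mons {l : List (Fin n)} (hl : l.Pairwise (· < ·)) {j : Fin n} (hj : j ∈ l) {r d : ℕ}
    {z : OmegaAlg K q n} (hz : z ∈ mons q l r d) : X K q n j * z ∈ mons q l r (d + 1) := by
  unfold mons at hz
  induction hz using Submodule.span_induction with
  | zero => simp
  | add x y _ _ hx hy => rw [mul_add]; exact add_mem hx hy
  | smul c x _ hx => rw [mul_smul_comm]; exact Submodule.smul_mem _ _ hx
  | mem x hx =>
    obtain ⟨m, rfl, rfl, rfl⟩ := hx
    exact (XY_E l hl j hj m).1

lemma Y_mons {l : List (Fin n)} (hl : l.Pairwise (· < ·)) {j : Fin n} (hj : j ∈ l) {r d : ℕ}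
    {z : OmegaAlg K q n} (hz : z ∈ mons q l r d) : Y K q n j * z ∈ mons q l (r + 1) (d + 1) := by
  unfold mons at hz
  induction hz using Submodule.span_induction with
  | zero => simp
  | add x y _ _ hx hy => rw [mul_add]; exact add_mem hx hy
  | smul c x _ hx => rw [mul_smul_comm]; exact Submodule.smul_mem _ _ hx
  | mem x hx =>
    obtain ⟨m, rfl, rfl, rfl⟩ := hx
    exact (XY_E l hl j hj m).2

lemma wordProd_cons (g : OmegaLetter n) (w : List (OmegaLetter n)) :
    wordProd K q n (g :: w) = gen K q n g * wordProd K q n w := by simp [wordProd]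

lemma wordProd_append (u v : List (OmegaLetter n)) :
    wordProd K q n (u ++ v) = wordProd K q n u * wordProd K q n v := by simp [wordProd]

lemma wordProd_mem_mons (w : List (OmegaLetter n)) :
    wordProd K q n w ∈ mons q (List.finRange n) (countY n w) w.length := by
  have hl : (List.finRange n).Pairwise (· < ·) := List.pairwise_lt_finRange n
  induction w with
  | nil =>
    refine Submodule.subset_span ⟨fun _ => (0, false), ?_, ?_, ?_⟩
    · simp [countY]
    · simp [wt]
    · simp [wordProd, E, blk]
  | cons g w ih =>
    rw [wordProd_cons]
    rcases g with j | j
    · have := X_mons hl (List.mem_finRange j) ih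
      exact mons_cast this (by simp [countY]) (by simp)
    · have := Y_mons hl (List.mem_finRange j) ih
      exact mons_cast this (by rw [countY, countY, List.filter_cons_of_pos (by rfl)]; rfl) (by simp)

lemma piece_le_mons (i d : ℕ) : piece K q n i d ≤ mons q (List.finRange n) i d := by
  refine Submodule.span_le.2 ?_
  rintro _ ⟨w, rfl, rfl, rfl⟩
  exact wordProd_mem_mons w

/-- full ordered monomials -/
noncomputable def mon (q : K) (m : Fin n → ℕ × Bool) : OmegaAlg K q n := E q (List.finRange n) m

lemma mons_eq (r d : ℕ) : mons q (List.finRange n) r d = Submodule.span K (mon q ''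
    {m | ∑ i, (m i).2.toNat = r ∧ ∑ i, wt (m i) = d}) := by
  unfold mons
  congr 1
  ext z
  simp only [Set.mem_ofPred_eq, Set.mem_image, mon, Fin.sum_univ_def, and_assoc]
  constructor
  · rintro ⟨m, h1, h2, rfl⟩; exact ⟨m, h1, h2, rfl⟩
  · rintro ⟨m, h1, h2, rfl⟩; exact ⟨m, h1, h2, rfl⟩

lemma span_wordProd : Submodule.span K (Set.range (wordProd K q n)) = ⊤ := by
  rw [eq_top_iff]
  rintro z -
  obtain ⟨f, rfl⟩ := RingQuot.mkAlgHom_surjective K (omegaRel K q n) z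
  induction f using FreeAlgebra.induction with
  | grade0 r =>
    rw [AlgHom.commutes, Algebra.algebraMap_eq_smul_one]
    exact Submodule.smul_mem _ _ (Submodule.subset_span ⟨[], rfl⟩)
  | grade1 x => exact Submodule.subset_span ⟨[x], by simp [wordProd, gen]⟩
  | add a b ha hb => rw [map_add]; exact add_mem ha hb
  | mul a b ha hb =>
    rw [map_mul]
    have := Submodule.mul_mem_mul ha hb
    rw [Submodule.span_mul_span] at this
    refine Submodule.span_mono ?_ this
    rintro _ ⟨_, ⟨u, rfl⟩, _, ⟨v, rfl⟩, rfl⟩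
    exact ⟨u ++ v, wordProd_append u v⟩

lemma span_mon : Submodule.span K (Set.range (mon q (n := n))) = ⊤ := by
  rw [eq_top_iff, ← span_wordProd, Submodule.span_le]
  rintro _ ⟨w, rfl⟩
  have := wordProd_mem_mons (K := K) (q := q) w
  rw [mons_eq] at this
  exact Submodule.span_mono (Set.image_subset_range _ _) this

/-- the word of an ordered monomial -/
def Eword (l : List (Fin n)) (m : Fin n → ℕ × Bool) : List (OmegaLetter n) :=
  l.flatMap fun i => List.replicate (m i).1 (Sum.inl i) ++ (if (m i).2 then [Sum.inr i] else [])

lemma wordProd_Eword (l : List (Fin n)) (m : Fin n → ℕ × Bool) :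
    wordProd K q n (Eword l m) = E q l m := by
  induction l with
  | nil => rfl
  | cons i l ih =>
    have : Eword (i :: l) m = (List.replicate (m i).1 (Sum.inl i) ++
      (if (m i).2 then [Sum.inr i] else [])) ++ Eword l m := by simp [Eword]
    rw [this, wordProd_append, ih, E_cons, wordProd_append]
    congr 1
    unfold blk
    congr 1
    · simp [wordProd, X]
    · split_ifs <;> simp [wordProd, Y]

lemma length_Eword (l : List (Fin n)) (m : Fin n → ℕ × Bool) :
    (Eword l m).length = (l.map fun i => wt (m i)).sum := by
  induction l with
  | nil => rfl
  | cons i l ih =>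
    have : Eword (i :: l) m = (List.replicate (m i).1 (Sum.inl i) ++
      (if (m i).2 then [Sum.inr i] else [])) ++ Eword l m := by simp [Eword]
    rw [this, List.length_append, ih]
    rcases hm : m i with ⟨a, _ | _⟩ <;> simp [wt, hm]

lemma countY_Eword (l : List (Fin n)) (m : Fin n → ℕ × Bool) :
    countY n (Eword l m) = (l.map fun i => (m i).2.toNat).sum := by
  induction l with
  | nil => rfl
  | cons i l ih =>
    have : Eword (i :: l) m = (List.replicate (m i).1 (Sum.inl i) ++
      (if (m i).2 then [Sum.inr i] else [])) ++ Eword l m := by simp [Eword]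
    rw [this]
    unfold countY at ih ⊢
    rw [List.filter_append, List.length_append, ih]
    rcases hm : m i with ⟨a, _ | _⟩
    · simp [hm]
    · simp only [hm, if_true, List.filter_append, List.map_cons, List.sum_cons,
        List.filter_cons_of_pos (show Sum.isRight (Sum.inr i : OmegaLetter n) = true from rfl)]
      simp

lemma mon_mem_piece (m : Fin n → ℕ × Bool) :
    mon q m ∈ piece K q n (∑ i, (m i).2.toNat) (∑ i, wt (m i)) := by
  refine Submodule.subset_span ⟨Eword (List.finRange n) m, ?_, ?_, ?_⟩
  · rw [length_Eword, Fin.sum_univ_def]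
  · rw [countY_Eword, Fin.sum_univ_def]
  · rw [wordProd_Eword]; rfl

section deRham

variable {δ : OmegaAlg K q n →ₗ[K] OmegaAlg K q n}

lemma delta_X (hδ : IsDeRham K q n δ) (i : Fin n) (v : List (OmegaLetter n)) :
    δ (X K q n i * wordProd K q n v) =
      q ^ countX n v • (Y K q n i * wordProd K q n v) + X K q n i * δ (wordProd K q n v) := by
  have h := hδ (Sum.inl i :: v)
  rw [wordProd_cons] at h
  change δ (X K q n i * wordProd K q n v) = _ at h
  rw [h, hδ v]
  refine (Fin.sum_univ_succ (n := v.length) _).trans ?_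
  congr 1
  · simp [countY, wordProd_cons, Y]
  · rw [Finset.mul_sum]
    refine Finset.sum_congr rfl fun k _ => ?_
    have e1 : (Sum.inl i :: v).get k.succ = v.get k := rfl
    rw [e1]
    rcases v.get k with a | a
    · simp [countY, wordProd_cons, X]
    · simp

lemma delta_Y (hδ : IsDeRham K q n δ) (i : Fin n) (v : List (OmegaLetter n)) :
    δ (Y K q n i * wordProd K q n v) = (-q⁻¹) • (Y K q n i * δ (wordProd K q n v)) := by
  have h := hδ (Sum.inr i :: v)
  rw [wordProd_cons] at h
  change δ (Y K q n i * wordProd K q n v) = _ at h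
  rw [h, hδ v]
  refine (Fin.sum_univ_succ (n := v.length) _).trans ?_
  rw [Finset.mul_sum, Finset.smul_sum]
  have e0 : (Sum.inr i :: v).get (0 : Fin (v.length + 1)) = Sum.inr i := rfl
  rw [e0, Sum.elim_inr, zero_add]
  refine Finset.sum_congr rfl fun k _ => ?_
  have e1 : (Sum.inr i :: v).get k.succ = v.get k := rfl
  rw [e1]
  have e2 : countY n ((Sum.inr i :: v).take (k.succ : ℕ)) = countY n (v.take k) + 1 := by
    simp only [Fin.val_succ, List.take_succ_cons, countY]
    rw [List.filter_cons_of_pos (by rfl)]; rfl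
  rcases v.get k with a | a
  · simp only [Sum.elim_inl, e2]
    simp only [Fin.val_succ, List.drop_succ_cons, List.set_cons_succ, wordProd_cons]
    rw [mul_smul_comm, smul_smul]
    congr 1
    ring
  · simp

lemma delta_Xpow (hδ : IsDeRham K q n δ) (i : Fin n) (a : ℕ) (v : List (OmegaLetter n)) :
    δ (X K q n i ^ a * wordProd K q n v) =
      (q ^ countX n v * qint q a) • (X K q n i ^ (a - 1) * (Y K q n i * wordProd K q n v)) +
        X K q n i ^ a * δ (wordProd K q n v) := by
  induction a with
  | zero => simp [qint]
  | succ a ih =>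
    have h1 : X K q n i ^ a * wordProd K q n v =
        wordProd K q n (List.replicate a (Sum.inl i) ++ v) := by
      rw [wordProd_append]; simp [wordProd, X]
    have h2 : countX n (List.replicate a (Sum.inl i) ++ v) = a + countX n v := by
      rw [countX, List.filter_append, List.length_append,
        List.filter_eq_self.2 (fun b hb => by rw [List.eq_of_mem_replicate hb]; rfl)]
      simp [countX]
    rw [pow_succ', mul_assoc, h1, delta_X hδ, h2, ← h1, ih, mul_add, mul_smul_comm,
      ← mul_assoc (Y K q n i), Y_Xpow_eq, smul_mul_assoc, smul_smul, ← add_assoc,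
      mul_assoc (X K q n i) (X K q n i ^ a) (δ _)]
    congr 1
    rcases a with _ | a
    · simp [qint]
    · rw [show a + 1 - 1 = a from rfl, show a + 1 + 1 - 1 = a + 1 from rfl,
        ← mul_assoc (X K q n i) (X K q n i ^ a), ← pow_succ',
        mul_assoc (X K q n i ^ (a + 1)), ← add_smul, qint_succ (a + 1)]
      congr 1
      ring

lemma delta_blk_false (hδ : IsDeRham K q n δ) (i : Fin n) (a : ℕ) (v : List (OmegaLetter n)) :
    δ (blk q i (a, false) * wordProd K q n v) =
      (q ^ countX n v * qint q a) • (blk q i (a - 1, true) * wordProd K q n v) +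
        blk q i (a, false) * δ (wordProd K q n v) := by
  simp [blk, delta_Xpow hδ, mul_assoc]

lemma delta_blk_true (hδ : IsDeRham K q n δ) (i : Fin n) (a : ℕ) (v : List (OmegaLetter n)) :
    δ (blk q i (a, true) * wordProd K q n v) =
      (-q⁻¹) • (blk q i (a, true) * δ (wordProd K q n v)) := by
  have h : Y K q n i * wordProd K q n v = wordProd K q n (Sum.inr i :: v) := by
    rw [wordProd_cons]; rfl
  simp only [blk, if_true, mul_assoc]
  rw [h, delta_Xpow hδ, ← h, Y_sq', delta_Y hδ]
  simp

lemma delta_one (hδ : IsDeRham K q n δ) : δ 1 = 0 := by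
  have := hδ []
  simpa [wordProd] using this

/-- span of monomials of the same weight as `m`, satisfying `P` -/
def same (q : K) (l : List (Fin n)) (m : Fin n → ℕ × Bool) (P : (Fin n → ℕ × Bool) → Prop) :
    Submodule K (OmegaAlg K q n) :=
  Submodule.span K {z | ∃ m', (∀ i, wt (m' i) = wt (m i)) ∧ P m' ∧ z = E q l m'}

lemma blk_mul_same {i : Fin n} {l : List (Fin n)} (hi : i ∉ l) {p : ℕ × Bool}
    {m : Fin n → ℕ × Bool} (hp : wt p = wt (m i)) {P P' : (Fin n → ℕ × Bool) → Prop}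
    (hP : ∀ m', P m' → P' (Function.update m' i p))
    {z : OmegaAlg K q n} (hz : z ∈ same q l m P) :
    blk q i p * z ∈ same q (i :: l) m P' := by
  unfold same at hz
  induction hz using Submodule.span_induction with
  | zero => simp
  | add x y _ _ hx hy => rw [mul_add]; exact add_mem hx hy
  | smul c x _ hx => rw [mul_smul_comm]; exact Submodule.smul_mem _ _ hx
  | mem x hx =>
    obtain ⟨m', h1, h2, rfl⟩ := hx
    refine Submodule.subset_span ⟨Function.update m' i p, ?_, hP _ h2, E_cons_update hi m' p⟩
    intro j
    rcases eq_or_ne j i with rfl | hj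
    · simpa using hp
    · rw [Function.update_of_ne hj]; exact h1 j

lemma delta_E_same (hδ : IsDeRham K q n δ) (l : List (Fin n)) (hl : l.Nodup)
    (m : Fin n → ℕ × Bool) : δ (E q l m) ∈ same q l m (fun _ => True) := by
  induction l with
  | nil => rw [E_nil, delta_one hδ]; simp
  | cons i l ih =>
    rw [List.nodup_cons] at hl
    rw [E_cons, ← wordProd_Eword]
    have h2 : E q l m ∈ same q l m (fun _ => True) :=
      Submodule.subset_span ⟨m, fun _ => rfl, trivial, rfl⟩
    rcases hp : m i with ⟨a, _ | _⟩
    · rw [delta_blk_false hδ, wordProd_Eword]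
      refine add_mem ?_ (blk_mul_same hl.1 (by rw [hp]) (fun _ _ => trivial) (ih hl.2))
      rcases a with _ | a
      · simp [qint]
      · exact Submodule.smul_mem _ _
          (blk_mul_same hl.1 (by rw [hp]; simp [wt]) (fun _ _ => trivial) h2)
    · rw [delta_blk_true hδ, wordProd_Eword]
      exact Submodule.smul_mem _ _
        (blk_mul_same hl.1 (by rw [hp]) (fun _ _ => trivial) (ih hl.2))

lemma delta_E_zero (hδ : IsDeRham K q n δ) (l : List (Fin n))
    (m : Fin n → ℕ × Bool) (hm : ∀ i ∈ l, qint q (wt (m i)) = 0) : δ (E q l m) = 0 := by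
  induction l with
  | nil => rw [E_nil, delta_one hδ]
  | cons i l ih =>
    have ih' := ih fun j hj => hm j (List.mem_cons_of_mem _ hj)
    have hi := hm i List.mem_cons_self
    rw [E_cons, ← wordProd_Eword]
    rcases hp : m i with ⟨a, _ | _⟩
    · rw [hp] at hi
      simp only [wt, Bool.toNat_false, add_zero] at hi
      rw [delta_blk_false hδ, wordProd_Eword, ih', hi]
      simp
    · rw [delta_blk_true hδ, wordProd_Eword, ih']; simp

/-- turn one `x_k` into `y_k` -/
def up (m : Fin n → ℕ × Bool) (k : Fin n) : Fin n → ℕ × Bool :=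
  Function.update m k ((m k).1 - 1, true)

lemma delta_E_lead (hq : q ≠ 0) (hδ : IsDeRham K q n δ) (l : List (Fin n)) (hl : l.Nodup)
    (m : Fin n → ℕ × Bool) (k : Fin n) (hk : k ∈ l) (hmk : (m k).2 = false) :
    ∃ u : K, u ≠ 0 ∧ δ (E q l m) - (u * qint q (m k).1) • E q l (up m k) ∈
      same q l m (fun m' => (m' k).2 = false) := by
  induction l with
  | nil => simp at hk
  | cons i l ih =>
    rw [List.nodup_cons] at hl
    rw [E_cons, ← wordProd_Eword]
    have h2 : E q l m ∈ same q l m (fun m' => (m' k).2 = false) :=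
      Submodule.subset_span ⟨m, fun _ => rfl, hmk, rfl⟩
    rcases eq_or_ne k i with rfl | hki
    · have hp : m k = ((m k).1, false) := by rw [← hmk]
      refine ⟨q ^ countX n (Eword l m), pow_ne_zero _ hq, ?_⟩
      rw [show blk q k (m k) = blk q k ((m k).1, false) by rw [← hp], delta_blk_false hδ,
        wordProd_Eword, up, ← E_cons_update hl.1, add_sub_cancel_left]
      exact blk_mul_same hl.1 (by rw [← hp]) (fun _ _ => by simp) (delta_E_same hδ l hl.2 m)
    · have hkl : k ∈ l := (List.mem_cons.1 hk).resolve_left hki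
      obtain ⟨u, hu, ih⟩ := ih hl.2 hkl
      have hE : E q (i :: l) (up m k) = blk q i (m i) * E q l (up m k) := by
        rw [E_cons, up, Function.update_of_ne hki.symm]
      have hb := blk_mul_same (P' := fun m' => (m' k).2 = false) hl.1 (rfl : wt (m i) = wt (m i))
        (fun m' (h : (m' k).2 = false) => by rwa [Function.update_of_ne hki]) ih
      rw [hE]
      rcases hp : m i with ⟨a, _ | _⟩
      · refine ⟨u, hu, ?_⟩
        rw [delta_blk_false hδ, wordProd_Eword, add_sub_assoc]
        rw [hp, mul_sub, mul_smul_comm] at hb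
        refine add_mem ?_ hb
        rcases a with _ | a
        · simp [qint]
        · exact Submodule.smul_mem _ _
            (blk_mul_same hl.1 (by rw [hp]; simp [wt])
              (fun m' h => by rwa [Function.update_of_ne hki]) h2)
      · refine ⟨-q⁻¹ * u, mul_ne_zero (neg_ne_zero.2 (inv_ne_zero hq)) hu, ?_⟩
        rw [delta_blk_true hδ, wordProd_Eword]
        rw [hp, mul_sub, mul_smul_comm] at hb
        have hb' := Submodule.smul_mem _ (-q⁻¹) hb
        rw [smul_sub, smul_smul, ← mul_assoc] at hb'
        exact hb'

end deRham

section PBW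

/-- partial sums of a weight -/
def ps (j : Fin n) (w : Fin n → ℤ) : ℤ := ∑ i ∈ Finset.Iio j, w i

/-- unit weight -/
def ee (j : Fin n) : Fin n → ℤ := Pi.single j 1

lemma ps_sub (j i : Fin n) (w : Fin n → ℤ) :
    ps j (w - ee i) = ps j w - if i < j then 1 else 0 := by
  simp [ps, ee, Finset.sum_sub_distrib, Pi.single_apply]

lemma tot_sub (i : Fin n) (w : Fin n → ℤ) :
    ∑ k, (w - ee i) k = ∑ k, w k - 1 := by
  simp [ee, Finset.sum_sub_distrib, Pi.single_apply]

lemma tot_sub' (i : Fin n) (w : Fin n → ℤ) :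
    ∑ k, (w k - ee i k) = ∑ k, w k - 1 := tot_sub i w

/-- the twisted exterior generator -/
def tau (q : K) (j : Fin n) (w : Fin n → ℤ) : Fin n → K :=
  fun i => if i ≤ j then q ^ (∑ k, w k - 2 * ps i w) else 0

lemma tau_le (hq : q ≠ 0) {i j : Fin n} (h : i ≤ j) (w : Fin n → ℤ) :
    tau q i w = q • tau q i (w - ee j) := by
  ext m
  simp only [tau, Pi.smul_apply, smul_eq_mul, tot_sub, ps_sub]
  by_cases hm : m ≤ i
  · rw [if_pos hm, if_pos hm, if_neg (not_lt.2 (hm.trans h))]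
    rw [show ∑ k, w k - 2 * ps m w = 1 + (∑ k, w k - 1 - 2 * (ps m w - 0)) by ring,
      zpow_add₀ hq, zpow_one]
  · rw [if_neg hm, if_neg hm, mul_zero]

lemma tau_gt (hq : q ≠ 0) {i j : Fin n} (h : j < i) (w : Fin n → ℤ) :
    tau q i w = q • tau q j (w - ee j) +
      q⁻¹ • (tau q i (w - ee j) - tau q j (w - ee j)) := by
  ext m
  simp only [tau, Pi.smul_apply, Pi.add_apply, Pi.sub_apply, smul_eq_mul, tot_sub', ps_sub]
  by_cases hm : m ≤ j
  · rw [if_pos hm, if_pos (hm.trans h.le), if_pos (hm.trans h.le), if_neg (not_lt.2 hm)]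
    rw [show ∑ k, w k - 2 * ps m w = 1 + (∑ k, w k - 1 - 2 * (ps m w - 0)) by ring,
      zpow_add₀ hq, zpow_one]
    ring
  · rw [if_neg hm, if_pos (not_le.1 hm)]
    by_cases hi : m ≤ i
    · rw [if_pos hi, if_pos hi]
      rw [show ∑ k, w k - 2 * ps m w = -1 + (∑ k, w k - 1 - 2 * (ps m w - 1)) by ring,
        zpow_add₀ hq, zpow_neg_one]
      ring
    · rw [if_neg hi, if_neg hi]; simp

/-- the space of the representation -/
abbrev MM (K : Type*) [Field K] (n : ℕ) := (Fin n → ℤ) → ExteriorAlgebra K (Fin n → K)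

/-- action of `x_j` -/
def opX (q : K) (j : Fin n) : MM K n →ₗ[K] MM K n where
  toFun f w := q ^ ps j w • f (w - ee j)
  map_add' f g := by ext w; simp
  map_smul' c f := by ext w; simp [smul_smul, mul_comm]

/-- action of `y_j` -/
noncomputable def opY (q : K) (j : Fin n) : MM K n →ₗ[K] MM K n where
  toFun f w := q ^ ps j w • (ExteriorAlgebra.ι K (tau q j (w - ee j)) * f (w - ee j))
  map_add' f g := by ext w; simp [mul_add]
  map_smul' c f := by ext w; simp [smul_smul, mul_comm]

lemma opX_apply (j : Fin n) (f : MM K n) (w : Fin n → ℤ) :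
    opX q j f w = q ^ ps j w • f (w - ee j) := rfl

lemma opY_apply (j : Fin n) (f : MM K n) (w : Fin n → ℤ) :
    opY q j f w =
      q ^ ps j w • (ExteriorAlgebra.ι K (tau q j (w - ee j)) * f (w - ee j)) := rfl

lemma ι_mul_swap (a b : Fin n → K) :
    ExteriorAlgebra.ι K a * ExteriorAlgebra.ι K b =
      - (ExteriorAlgebra.ι K b * ExteriorAlgebra.ι K a) :=
  eq_neg_of_add_eq_zero_left (ExteriorAlgebra.ι_add_mul_swap a b)

lemma op_rel (hq : q ≠ 0) ⦃a b : FreeAlgebra K (OmegaLetter n)⦄ (h : omegaRel K q n a b) :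
    FreeAlgebra.lift K (Sum.elim (opX q) (opY q) : OmegaLetter n → Module.End K (MM K n)) a =
    FreeAlgebra.lift K (Sum.elim (opX q) (opY q) : OmegaLetter n → Module.End K (MM K n)) b := by
  induction h with
  | @xx i j h =>
    simp only [map_mul, map_smul, FreeAlgebra.lift_ι_apply, Sum.elim_inl]
    ext1 f; ext1 w
    simp only [Module.End.mul_apply, LinearMap.smul_apply, Pi.smul_apply, opX_apply, ps_sub,
      if_neg h.not_gt, if_pos h, smul_smul, sub_right_comm w (ee j) (ee i)]
    congr 1
    rw [sub_zero, zpow_sub₀ hq, zpow_one]; field_simp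
  | @yx_gt i j h =>
    simp only [map_mul, map_smul, FreeAlgebra.lift_ι_apply, Sum.elim_inl, Sum.elim_inr]
    ext1 f; ext1 w
    simp only [Module.End.mul_apply, opX_apply, opY_apply, ps_sub,
      if_neg h.not_gt, if_pos h, smul_smul, sub_right_comm w (ee i) (ee j), mul_smul_comm]
    rw [tau_le hq h.le, map_smul, smul_mul_assoc, smul_smul]
    congr 1
    rw [sub_zero, zpow_sub₀ hq, zpow_one]; field_simp
  | yx_eq i =>
    simp only [map_mul, map_smul, FreeAlgebra.lift_ι_apply, Sum.elim_inl, Sum.elim_inr]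
    ext1 f; ext1 w
    simp only [Module.End.mul_apply, opX_apply, opY_apply, ps_sub, LinearMap.smul_apply,
      Pi.smul_apply, lt_irrefl, if_false, smul_smul, mul_smul_comm]
    rw [tau_le hq le_rfl, map_smul, smul_mul_assoc, smul_smul]
    congr 1
    rw [sub_zero]; ring
  | @yx_lt i j h =>
    simp only [map_mul, map_smul, map_add, FreeAlgebra.lift_ι_apply, Sum.elim_inl, Sum.elim_inr]
    ext1 f; ext1 w
    simp only [Module.End.mul_apply, opX_apply, opY_apply, ps_sub, LinearMap.smul_apply,
      LinearMap.add_apply, Pi.add_apply,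
      Pi.smul_apply, if_neg h.not_gt, if_pos h, smul_smul, mul_smul_comm,
      sub_right_comm w (ee i) (ee j)]
    rw [tau_gt hq h, map_add, map_smul, map_smul, map_sub, sub_zero, zpow_sub₀ hq, zpow_one,
      add_mul, smul_mul_assoc, smul_mul_assoc, sub_mul]
    module
  | @yy i j h =>
    simp only [map_mul, map_smul, map_add, FreeAlgebra.lift_ι_apply, Sum.elim_inl, Sum.elim_inr]
    ext1 f; ext1 w
    simp only [Module.End.mul_apply, opX_apply, opY_apply, ps_sub, LinearMap.smul_apply,
      LinearMap.add_apply, Pi.add_apply,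
      Pi.smul_apply, if_neg h.not_gt, if_pos h, smul_smul, mul_smul_comm,
      sub_right_comm w (ee j) (ee i)]
    rw [tau_gt hq h, tau_le hq h.le (w - ee j), sub_right_comm w (ee j) (ee i)]
    simp only [map_add, map_smul, map_sub, zpow_sub₀ hq, sub_zero, zpow_one,
      add_mul, smul_mul_assoc, sub_mul, ← mul_assoc, ExteriorAlgebra.ι_sq_zero, zero_mul]
    rw [ι_mul_swap (tau q i _)]
    simp only [neg_mul, smul_neg, smul_zero, zero_add, sub_zero, smul_smul, ← neg_smul]
    congr 1
    field_simp
  | ysq i =>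
    simp only [map_mul, map_zero, FreeAlgebra.lift_ι_apply, Sum.elim_inr]
    ext1 f; ext1 w
    simp only [Module.End.mul_apply, opY_apply, ps_sub, LinearMap.zero_apply, Pi.zero_apply,
      mul_smul_comm]
    rw [tau_le hq (le_refl i) (w - ee i), map_smul, smul_mul_assoc, ← mul_assoc,
      ExteriorAlgebra.ι_sq_zero]
    simp

/-- the representation -/
noncomputable def rep (hq : q ≠ 0) : OmegaAlg K q n →ₐ[K] Module.End K (MM K n) :=
  RingQuot.liftAlgHom K ⟨FreeAlgebra.lift K (Sum.elim (opX q) (opY q)), op_rel hq⟩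

lemma rep_X (hq : q ≠ 0) (i : Fin n) : rep hq (X K q n i) = opX q i := by
  unfold rep X gen
  rw [RingQuot.liftAlgHom_mkAlgHom_apply, FreeAlgebra.lift_ι_apply]; rfl

lemma rep_Y (hq : q ≠ 0) (i : Fin n) : rep hq (Y K q n i) = opY q i := by
  unfold rep Y gen
  rw [RingQuot.liftAlgHom_mkAlgHom_apply, FreeAlgebra.lift_ι_apply]; rfl

lemma opX_single (j : Fin n) (w : Fin n → ℤ) (x : ExteriorAlgebra K (Fin n → K)) :
    opX q j (Pi.single w x) = q ^ ps j (w + ee j) • Pi.single (w + ee j) x := by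
  ext1 v
  rw [opX_apply, Pi.smul_apply]
  by_cases h : v = w + ee j
  · subst h; simp
  · rw [Pi.single_eq_of_ne h, Pi.single_eq_of_ne, smul_zero, smul_zero]
    rintro rfl; simp at h

lemma opY_single (j : Fin n) (w : Fin n → ℤ) (x : ExteriorAlgebra K (Fin n → K)) :
    opY q j (Pi.single w x) = q ^ ps j (w + ee j) •
      Pi.single (w + ee j) (ExteriorAlgebra.ι K (tau q j w) * x) := by
  ext1 v
  rw [opY_apply, Pi.smul_apply]
  by_cases h : v = w + ee j
  · subst h; simp
  · rw [Pi.single_eq_of_ne h, Pi.single_eq_of_ne, mul_zero, smul_zero, smul_zero]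
    rintro rfl; simp at h

lemma opX_pow_single (hq : q ≠ 0) (j : Fin n) (a : ℕ) (w : Fin n → ℤ)
    (x : ExteriorAlgebra K (Fin n → K)) : ∃ u : K, u ≠ 0 ∧
    ((opX q j : Module.End K (MM K n)) ^ a) (Pi.single w x) =
      u • Pi.single (w + a • ee j) x := by
  induction a with
  | zero => exact ⟨1, one_ne_zero, by simp⟩
  | succ a ih =>
    obtain ⟨u, hu, h⟩ := ih
    refine ⟨u * q ^ ps j (w + a • ee j + ee j), mul_ne_zero hu (zpow_ne_zero _ hq), ?_⟩
    rw [pow_succ', Module.End.mul_apply, h, map_smul, opX_single, smul_smul, succ_nsmul, add_assoc]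

/-- exterior generators -/
def TT (K : Type*) [Field K] (j : Fin n) : Fin n → K := fun i => if i ≤ j then 1 else 0

lemma tau_eq (j : Fin n) (w : Fin n → ℤ) (hw : ∀ i < j, w i = 0) :
    tau q j w = q ^ (∑ k, w k) • TT K j := by
  ext m
  simp only [tau, TT, Pi.smul_apply, smul_eq_mul]
  split_ifs with h
  · have : ps m w = 0 := Finset.sum_eq_zero fun i hi =>
      hw i (lt_of_lt_of_le (Finset.mem_Iio.1 hi) h)
    rw [this]; simp
  · simp

/-- weight -/
def WW (l : List (Fin n)) (m : Fin n → ℕ × Bool) : Fin n → ℤ :=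
  fun k => if k ∈ l then (wt (m k) : ℤ) else 0

lemma WW_cons {i : Fin n} {l : List (Fin n)} (hi : i ∉ l) (m : Fin n → ℕ × Bool) :
    WW (i :: l) m = WW l m + wt (m i) • ee i := by
  ext k
  rcases eq_or_ne k i with rfl | hk
  · simp [WW, hi, ee]
  · simp [WW, ee, hk]

/-- exterior monomials -/
noncomputable def TP (K : Type*) [Field K] (l : List (Fin n)) (s : Fin n → Bool) :
    ExteriorAlgebra K (Fin n → K) :=
  (l.map fun i => if s i then ExteriorAlgebra.ι K (TT K i) else 1).prod

lemma TP_cons (i : Fin n) (l : List (Fin n)) (s : Fin n → Bool) :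
    TP K (i :: l) s = (if s i then ExteriorAlgebra.ι K (TT K i) else 1) * TP K l s := by
  simp [TP]

lemma rep_E (hq : q ≠ 0) (l : List (Fin n)) (hl : l.Pairwise (· < ·)) (m : Fin n → ℕ × Bool) :
    ∃ u : K, u ≠ 0 ∧ rep hq (E q l m) (Pi.single 0 1) =
      u • Pi.single (WW l m) (TP K l fun i => (m i).2) := by
  induction l with
  | nil => exact ⟨1, one_ne_zero, by simp [E_nil, TP, WW]; rfl⟩
  | cons i l ih =>
    rw [List.pairwise_cons] at hl
    have hi : i ∉ l := fun h => lt_irrefl _ (hl.1 i h)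
    obtain ⟨u, hu, ih⟩ := ih hl.2
    rw [E_cons, map_mul, Module.End.mul_apply, ih, map_smul, WW_cons hi, TP_cons]
    have hw : ∀ k < i, WW l m k = 0 := fun k hk => by
      rw [WW, if_neg]; intro hkl; exact lt_asymm hk (hl.1 k hkl)
    rcases hp : m i with ⟨a, _ | _⟩
    · obtain ⟨v, hv, h⟩ := opX_pow_single hq i a (WW l m) (TP K l fun i => (m i).2)
      refine ⟨u * v, mul_ne_zero hu hv, ?_⟩
      simp only [blk, Bool.false_eq_true, if_false, mul_one, one_mul, map_pow, rep_X, h, smul_smul,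
        wt, Bool.toNat_false, add_zero]
    · obtain ⟨v, hv, h⟩ := opX_pow_single hq i a (WW l m + ee i)
        (ExteriorAlgebra.ι K (TT K i) * TP K l fun i => (m i).2)
      refine ⟨u * (q ^ ps i (WW l m + ee i) * (q ^ (∑ k, WW l m k) * v)), ?_, ?_⟩
      · exact mul_ne_zero hu (mul_ne_zero (zpow_ne_zero _ hq) (mul_ne_zero (zpow_ne_zero _ hq) hv))
      · simp only [blk, if_true, map_mul, map_pow, rep_X, rep_Y, Module.End.mul_apply]
        rw [opY_single, tau_eq i _ hw, map_smul (ExteriorAlgebra.ι K), smul_mul_assoc,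
          Pi.single_smul, map_smul, map_smul, h, smul_smul, smul_smul, smul_smul]
        simp only [wt, Bool.toNat_true, succ_nsmul, mul_assoc]
        rw [add_assoc, add_comm (ee i)]

/-- dual basis -/
def dd (K : Type*) [Field K] (k : Fin n) : Module.Dual K (Fin n → K) :=
  LinearMap.proj k - (if h : k.1 + 1 < n then LinearMap.proj ⟨k.1 + 1, h⟩ else 0)

lemma dd_TT (k i : Fin n) : dd K k (TT K i) = if k = i then 1 else 0 := by
  have hi := i.2
  by_cases h1 : k.1 + 1 < n
  · rw [dd, dif_pos h1]
    simp only [LinearMap.sub_apply, LinearMap.proj_apply, TT, Fin.le_def, Fin.ext_iff]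
    split_ifs <;> first | omega | simp
  · rw [dd, dif_neg h1]
    simp only [LinearMap.sub_apply, LinearMap.proj_apply, TT, Fin.le_def, Fin.ext_iff,
      LinearMap.zero_apply, sub_zero]
    split_ifs <;> first | omega | simp

/-- contraction -/
noncomputable def con (K : Type*) [Field K] (k : Fin n) :
    ExteriorAlgebra K (Fin n → K) →ₗ[K] ExteriorAlgebra K (Fin n → K) :=
  CliffordAlgebra.contractLeft (dd K k)

lemma con_one (k : Fin n) : con K k 1 = 0 := CliffordAlgebra.contractLeft_one _ _

lemma con_ι_mul (k : Fin n) (v : Fin n → K) (x : ExteriorAlgebra K (Fin n → K)) :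
    con K k (ExteriorAlgebra.ι K v * x) =
      dd K k v • x - ExteriorAlgebra.ι K v * con K k x :=
  CliffordAlgebra.contractLeft_ι_mul _ _ _

lemma con_TP (k : Fin n) (l : List (Fin n)) (hk : k ∉ l) (s : Fin n → Bool) :
    con K k (TP K l s) = 0 := by
  induction l with
  | nil => exact con_one k
  | cons i l ih =>
    rw [List.mem_cons, not_or] at hk
    rw [TP_cons]
    split_ifs
    · rw [con_ι_mul, ih hk.2, dd_TT, if_neg hk.1]; simp
    · rw [one_mul, ih hk.2]

/-- coefficient functionals -/
noncomputable def Psi (K : Type*) [Field K] (s : Fin n → Bool) :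
    List (Fin n) → ExteriorAlgebra K (Fin n → K) →ₗ[K] K
  | [] => (ExteriorAlgebra.algebraMapInv : ExteriorAlgebra K (Fin n → K) →ₐ[K] K).toLinearMap
  | i :: l => Psi K s l ∘ₗ (if s i then con K i else
      con K i ∘ₗ LinearMap.mulLeft K (ExteriorAlgebra.ι K (TT K i)))

lemma Psi_TP (l : List (Fin n)) (hl : l.Nodup) (s s' : Fin n → Bool) :
    Psi K s l (TP K l s') = if ∀ i ∈ l, s i = s' i then 1 else 0 := by
  induction l with
  | nil => simp [Psi, TP]
  | cons i l ih =>
    rw [List.nodup_cons] at hl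
    have ih := ih hl.2
    have h0 := con_TP (K := K) i l hl.1 s'
    rw [Psi, TP_cons, LinearMap.comp_apply]
    simp only [List.forall_mem_cons]
    cases hs : s i <;> cases hs' : s' i
    · simp [con_ι_mul, h0, dd_TT, ih]
    · simp [← mul_assoc, ExteriorAlgebra.ι_sq_zero]
    · simp [h0]
    · simp [con_ι_mul, h0, dd_TT, ih]

lemma mon_linearIndependent (hq : q ≠ 0) : LinearIndependent K (mon q (n := n)) := by
  classical
  rw [linearIndependent_iff']
  intro t g hg m₀ hm₀
  have hl : (List.finRange n).Pairwise (· < ·) := List.pairwise_lt_finRange n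
  choose u hu hE using fun m => rep_E (K := K) (n := n) hq (List.finRange n) hl m
  have h := congrArg (fun z => Psi K (fun i => (m₀ i).2) (List.finRange n)
    (rep hq z (Pi.single 0 1) (WW (List.finRange n) m₀))) hg
  simp only [map_sum, map_smul, LinearMap.sum_apply, LinearMap.smul_apply, map_zero,
    LinearMap.zero_apply, Finset.sum_apply, Pi.smul_apply, Pi.zero_apply, mon, hE] at h
  rw [Finset.sum_eq_single m₀] at h
  · rw [Pi.single_eq_same, Psi_TP _ (List.nodup_finRange n), if_pos (fun _ _ => rfl)] at h
    simpa [hu m₀] using h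
  · intro m _ hm
    by_cases hW : WW (List.finRange n) m₀ = WW (List.finRange n) m
    · rw [hW, Pi.single_eq_same, Psi_TP _ (List.nodup_finRange n), if_neg]
      · simp
      · intro h2
        apply hm
        ext i
        · have h3 := congrFun hW i
          have h4 := h2 i (List.mem_finRange i)
          simp only [WW, List.mem_finRange, if_true, wt, Nat.cast_inj, h4] at h3
          omega
        · exact (h2 i (List.mem_finRange i)).symm
    · rw [Pi.single_eq_of_ne hW]; simp
  · exact fun h => absurd hm₀ h

/-- the PBW basis -/
noncomputable def pbw (n : ℕ) (hq : q ≠ 0) :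
    Module.Basis (Fin n → ℕ × Bool) K (OmegaAlg K q n) :=
  Module.Basis.mk (mon_linearIndependent hq) span_mon.ge

lemma pbw_apply (hq : q ≠ 0) (m : Fin n → ℕ × Bool) : pbw n hq m = mon q m := by
  simp [pbw]

end PBW

section cohomology

variable {δ : OmegaAlg K q n →ₗ[K] OmegaAlg K q n}

lemma delta_word_mem (hδ : IsDeRham K q n δ) (v : List (OmegaLetter n)) :
    δ (wordProd K q n v) ∈ Submodule.span K
      {z | ∃ u : List (OmegaLetter n), countX n u + 1 = countX n v ∧ z = wordProd K q n u} := by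
  have key : ∀ (g : OmegaLetter n) (v : List (OmegaLetter n)) (z : OmegaAlg K q n),
      z ∈ Submodule.span K {z | ∃ u : List (OmegaLetter n), countX n u + 1 = countX n v ∧
        z = wordProd K q n u} → gen K q n g * z ∈ Submodule.span K
      {z | ∃ u : List (OmegaLetter n), countX n u + 1 = countX n (g :: v) ∧
        z = wordProd K q n u} := by
    intro g v z hz
    induction hz using Submodule.span_induction with
    | zero => simp
    | add x y _ _ hx hy => rw [mul_add]; exact add_mem hx hy
    | smul c x _ hx => rw [mul_smul_comm]; exact Submodule.smul_mem _ _ hx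
    | mem x hx =>
      obtain ⟨u, hu, rfl⟩ := hx
      refine Submodule.subset_span ⟨g :: u, ?_, (wordProd_cons g u).symm⟩
      unfold countX at hu ⊢
      rw [List.filter_cons, List.filter_cons]
      split_ifs
      · simp only [List.length_cons, hu]
      · exact hu
  induction v with
  | nil =>
    have : wordProd K q n [] = 1 := rfl
    rw [this, delta_one hδ]; simp
  | cons g v ih =>
    rw [wordProd_cons]
    have h1 := key g v _ ih
    rcases g with i | i
    · change δ (X K q n i * _) ∈ _
      rw [delta_X hδ]
      refine add_mem (Submodule.smul_mem _ _ (Submodule.subset_span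
        ⟨Sum.inr i :: v, ?_, (wordProd_cons _ _).symm⟩)) h1
      unfold countX
      rw [List.filter_cons_of_neg (by simp), List.filter_cons_of_pos (by rfl)]; rfl
    · change δ (Y K q n i * _) ∈ _
      rw [delta_Y hδ]
      exact Submodule.smul_mem _ _ h1

lemma delta_Y_all (hδ : IsDeRham K q n δ) (i : Fin n) (z : OmegaAlg K q n) :
    δ (Y K q n i * z) = (-q⁻¹) • (Y K q n i * δ z) := by
  have hz : z ∈ Submodule.span K (Set.range (wordProd K q n)) := by
    rw [span_wordProd]; trivial
  induction hz using Submodule.span_induction with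
  | zero => simp
  | add x y _ _ hx hy => rw [mul_add, map_add, hx, hy, map_add, mul_add, smul_add]
  | smul c x _ hx =>
    rw [mul_smul_comm, map_smul, hx, map_smul, mul_smul_comm, smul_comm]
  | mem x hx =>
    obtain ⟨v, rfl⟩ := hx
    exact delta_Y hδ i v

lemma delta_X_all (hq : q ≠ 0) (hδ : IsDeRham K q n δ) (i : Fin n) (x : ℕ) (z : OmegaAlg K q n)
    (hz : z ∈ Submodule.span K
      {z | ∃ u : List (OmegaLetter n), countX n u + 1 = x ∧ z = wordProd K q n u}) :
    δ (X K q n i * z) = (q⁻¹ * q ^ x) • (Y K q n i * z) + X K q n i * δ z := by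
  induction hz using Submodule.span_induction with
  | zero => simp
  | add x y _ _ hx hy =>
    rw [mul_add, map_add, hx, hy, map_add, mul_add, mul_add, smul_add]; abel
  | smul c x _ hx =>
    rw [mul_smul_comm, map_smul, hx, map_smul, mul_smul_comm, mul_smul_comm, smul_add, smul_comm]
  | mem z hx =>
    obtain ⟨v, rfl, rfl⟩ := hx
    rw [delta_X hδ, pow_succ', inv_mul_cancel_left₀ hq]

lemma delta_delta (hq : q ≠ 0) (hδ : IsDeRham K q n δ) (z : OmegaAlg K q n) : δ (δ z) = 0 := by
  have hz : z ∈ Submodule.span K (Set.range (wordProd K q n)) := by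
    rw [span_wordProd]; trivial
  induction hz using Submodule.span_induction with
  | zero => simp
  | add x y _ _ hx hy => rw [map_add, map_add, hx, hy, add_zero]
  | smul c x _ hx => rw [map_smul, map_smul, hx, smul_zero]
  | mem x hx =>
    obtain ⟨v, rfl⟩ := hx
    induction v with
    | nil =>
      have : wordProd K q n [] = 1 := rfl
      rw [this, delta_one hδ, map_zero]
    | cons g v ih =>
      rw [wordProd_cons]
      rcases g with i | i
      · change δ (δ (X K q n i * _)) = 0
        rw [delta_X hδ, map_add, map_smul, delta_Y hδ,
          delta_X_all hq hδ i _ _ (delta_word_mem hδ v), ih, mul_zero, add_zero, smul_smul,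
          ← add_smul]
        convert zero_smul K _ using 2
        ring
      · change δ (δ (Y K q n i * _)) = 0
        rw [delta_Y hδ, map_smul, delta_Y_all hδ, ih]
        simp

variable {ℓ : ℕ}

lemma qint_eq_zero (hℓ : 1 < ℓ) (hodd : Odd ℓ) (hq : IsPrimitiveRoot q ℓ) (a : ℕ) :
    qint q a = 0 ↔ ℓ ∣ a := by
  have h2 : IsPrimitiveRoot (q ^ 2) ℓ :=
    hq.pow_of_coprime 2 (Nat.coprime_two_left.2 hodd)
  have hne : q ^ 2 - 1 ≠ 0 := sub_ne_zero.2 (h2.ne_one hℓ)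
  have hg : qint q a * (q ^ 2 - 1) = (q ^ 2) ^ a - 1 := geom_sum_mul _ _
  rw [← h2.pow_eq_one_iff_dvd, ← sub_eq_zero (a := (q ^ 2) ^ a), ← hg, mul_eq_zero]
  simp [hne]

/-- first bad index -/
def IsK (ℓ : ℕ) (m : Fin n → ℕ × Bool) (k : Fin n) : Prop :=
  ¬ ℓ ∣ wt (m k) ∧ ∀ j < k, ℓ ∣ wt (m j)

lemma IsK.unique {m : Fin n → ℕ × Bool} {k k' : Fin n} (h : IsK ℓ m k) (h' : IsK ℓ m k') :
    k = k' := by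
  rcases lt_trichotomy k k' with hk | hk | hk
  · exact absurd (h'.2 _ hk) h.1
  · exact hk
  · exact absurd (h.2 _ hk) h'.1

lemma IsK.congr {m m' : Fin n → ℕ × Bool} {k : Fin n} (h : IsK ℓ m k)
    (hm : ∀ i, wt (m' i) = wt (m i)) : IsK ℓ m' k := by
  refine ⟨by rw [hm]; exact h.1, fun j hj => by rw [hm]; exact h.2 j hj⟩

/-- good monomials -/
def good (n ℓ : ℕ) : Set (Fin n → ℕ × Bool) := {m | ∀ i, ℓ ∣ wt (m i)}

/-- bad monomials by the bit of their first bad index -/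
def idx (n ℓ : ℕ) (b : Bool) : Set (Fin n → ℕ × Bool) := {m | ∃ k, IsK ℓ m k ∧ (m k).2 = b}

lemma exists_IsK {m : Fin n → ℕ × Bool} (h : m ∉ good n ℓ) : ∃ k, IsK ℓ m k := by
  classical
  have h' : ∃ i, ¬ ℓ ∣ wt (m i) := by simpa [good] using h
  obtain ⟨k, hk, hmin⟩ := WellFounded.has_min (wellFounded_lt (α := Fin n))
    {i | ¬ ℓ ∣ wt (m i)} h'
  refine ⟨k, hk, fun j hj => ?_⟩
  by_contra hc
  exact hmin j hc hj

lemma bad_subset : (good n ℓ)ᶜ ⊆ idx n ℓ true ∪ idx n ℓ false := by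
  intro m hm
  obtain ⟨k, hk⟩ := exists_IsK hm
  cases h : (m k).2
  · exact Or.inr ⟨k, hk, h⟩
  · exact Or.inl ⟨k, hk, h⟩

lemma wt_up {m : Fin n → ℕ × Bool} {k : Fin n} (hk : IsK ℓ m k) (hb : (m k).2 = false) (i : Fin n) :
    wt (up m k i) = wt (m i) := by
  rcases eq_or_ne i k with rfl | hi
  · have h0 : (m i).1 ≠ 0 := by
      intro h0
      apply hk.1
      simp [wt, h0, hb]
    simp only [up, Function.update_self, wt, hb, Bool.toNat_true, Bool.toNat_false]
    omega
  · simp [up, Function.update_of_ne hi]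

lemma delta_mon_lead (hℓ : 1 < ℓ) (hodd : Odd ℓ) (hq : IsPrimitiveRoot q ℓ) (hq0 : q ≠ 0)
    (hδ : IsDeRham K q n δ) (m : Fin n → ℕ × Bool) (k : Fin n) (hk : IsK ℓ m k)
    (hb : (m k).2 = false) : ∃ u : K, u ≠ 0 ∧
      δ (mon q m) - u • mon q (up m k) ∈ Submodule.span K (mon q '' idx n ℓ false) := by
  obtain ⟨u, hu, h⟩ := delta_E_lead hq0 hδ (List.finRange n) (List.nodup_finRange n) m k
    (List.mem_finRange k) hb
  have hk1 : qint q (m k).1 ≠ 0 := by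
    rw [Ne, qint_eq_zero hℓ hodd hq]
    have := hk.1
    simpa [wt, hb] using this
  refine ⟨u * qint q (m k).1, mul_ne_zero hu hk1, ?_⟩
  refine Submodule.span_mono ?_ h
  rintro _ ⟨m', h1, h2, rfl⟩
  exact ⟨m', ⟨k, hk.congr h1, h2⟩, rfl⟩

lemma idx_true_le (hℓ : 1 < ℓ) (hodd : Odd ℓ) (hq : IsPrimitiveRoot q ℓ) (hq0 : q ≠ 0)
    (hδ : IsDeRham K q n δ) : Submodule.span K (mon q '' idx n ℓ true) ≤
      LinearMap.range δ ⊔ Submodule.span K (mon q '' idx n ℓ false) := by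
  rw [Submodule.span_le]
  rintro _ ⟨m, ⟨k, hk, hb⟩, rfl⟩
  set m₀ : Fin n → ℕ × Bool := Function.update m k ((m k).1 + 1, false) with hm₀
  have hw : ∀ i, wt (m₀ i) = wt (m i) := by
    intro i
    rcases eq_or_ne i k with rfl | hi
    · simp [hm₀, wt, hb]
    · simp [hm₀, Function.update_of_ne hi]
  have hup : up m₀ k = m := by
    simp only [up, hm₀, Function.update_self, Function.update_idem, Nat.add_sub_cancel]
    rw [← hb]
    exact Function.update_eq_self k m
  obtain ⟨u, hu, h⟩ := delta_mon_lead hℓ hodd hq hq0 hδ m₀ k (hk.congr hw) (by simp [hm₀])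
  rw [hup] at h
  have : mon q m = u⁻¹ • (δ (mon q m₀) - (δ (mon q m₀) - u • mon q m)) := by
    rw [sub_sub_cancel, smul_smul, inv_mul_cancel₀ hu, one_smul]
  rw [SetLike.mem_coe, this]
  exact Submodule.smul_mem _ _ (sub_mem (Submodule.mem_sup_left ⟨_, rfl⟩)
    (Submodule.mem_sup_right h))

lemma idx_false_inj (hℓ : 1 < ℓ) (hodd : Odd ℓ) (hq : IsPrimitiveRoot q ℓ) (hq0 : q ≠ 0)
    (hδ : IsDeRham K q n δ) (z : OmegaAlg K q n)
    (hz : z ∈ Submodule.span K (mon q '' idx n ℓ false)) (h0 : δ z = 0) : z = 0 := by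
  classical
  set b := pbw n hq0 with hb
  have hbm : (b : (Fin n → ℕ × Bool) → OmegaAlg K q n) = mon q := by
    ext m; exact pbw_apply hq0 m
  have hsupp : ∀ r ∈ Submodule.span K (mon q '' idx n ℓ false), ∀ m ∉ idx n ℓ false,
      b.repr r m = 0 := by
    intro r hr m hm
    rw [← hbm, Module.Basis.mem_span_image] at hr
    by_contra hc
    exact hm (hr (Finsupp.mem_support_iff.2 hc))
  have main : ∀ m k, IsK ℓ m k → (m k).2 = false → ∃ u : K, u ≠ 0 ∧
      ∀ z ∈ Submodule.span K (mon q '' idx n ℓ false),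
        b.repr (δ z) (up m k) = u * b.repr z m := by
    intro m k hk hmk
    obtain ⟨u, hu, h⟩ := delta_mon_lead hℓ hodd hq hq0 hδ m k hk hmk
    have hwu := wt_up hk hmk
    have hnot : up m k ∉ idx n ℓ false := by
      rintro ⟨k', hk', hf⟩
      have : k' = k := hk'.unique (hk.congr hwu)
      subst this
      simp [up] at hf
    refine ⟨u, hu, fun z hz => ?_⟩
    induction hz using Submodule.span_induction with
    | zero => simp
    | add x y _ _ hx hy => simp [hx, hy, mul_add]
    | smul c x _ hx => simp [hx]; ring
    | mem x hx =>
      obtain ⟨m', ⟨k', hk', hm'⟩, rfl⟩ := hx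
      obtain ⟨u', hu', h'⟩ := delta_mon_lead hℓ hodd hq hq0 hδ m' k' hk' hm'
      by_cases hmm : m' = m
      · subst hmm
        have h3 := hsupp _ h _ hnot
        rw [map_sub, map_smul, ← hbm, Module.Basis.repr_self] at h3
        rw [← hbm, Module.Basis.repr_self]
        simp only [Finsupp.coe_sub, Finsupp.coe_smul, Pi.sub_apply, Pi.smul_apply,
          Finsupp.single_eq_same, smul_eq_mul] at h3 ⊢
        exact sub_eq_zero.1 h3
      · have hne : up m' k' ≠ up m k := by
          intro he
          have hkk : k' = k := by
            refine (hk'.congr (wt_up hk' hm')).unique (m := up m' k') ?_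
            rw [he]; exact hk.congr hwu
          subst hkk
          apply hmm
          have hwm : ∀ i, wt (m' i) = wt (m i) := fun i => by
            rw [← hwu i, ← he, wt_up hk' hm' i]
          funext i
          rcases eq_or_ne i k' with rfl | hi
          · have := hwm i
            simp only [wt, hmk, hm'] at this
            exact Prod.ext (by omega) (by rw [hmk, hm'])
          · have := congrFun he i
            simpa [up, Function.update_of_ne hi] using this
        have h3 := hsupp _ h' _ hnot
        rw [map_sub, map_smul, ← hbm, Module.Basis.repr_self] at h3
        rw [← hbm, Module.Basis.repr_self]
        simp only [Finsupp.coe_sub, Finsupp.coe_smul, Pi.sub_apply, Pi.smul_apply,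
          smul_eq_mul] at h3 ⊢
        rw [Finsupp.single_eq_of_ne hne.symm] at h3
        rw [Finsupp.single_eq_of_ne (Ne.symm hmm)]
        simpa using h3
  apply b.repr.injective
  rw [map_zero]
  ext m
  by_cases hm : m ∈ idx n ℓ false
  · obtain ⟨k, hk, hmk⟩ := hm
    obtain ⟨u, hu, h⟩ := main m k hk hmk
    have := h z hz
    rw [h0] at this
    simpa [hu] using this.symm
  · exact hsupp z hz m hm

lemma delta_good (hℓ : 1 < ℓ) (hodd : Odd ℓ) (hq : IsPrimitiveRoot q ℓ)
    (hδ : IsDeRham K q n δ) (z : OmegaAlg K q n)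
    (hz : z ∈ Submodule.span K (mon q '' good n ℓ)) : δ z = 0 := by
  have : Submodule.span K (mon q '' good n ℓ) ≤ LinearMap.ker δ := by
    rw [Submodule.span_le]
    rintro _ ⟨m, hm, rfl⟩
    exact delta_E_zero hδ _ m fun i _ => (qint_eq_zero hℓ hodd hq _).2 (hm i)
  exact this hz

lemma range_le_bad (hℓ : 1 < ℓ) (hodd : Odd ℓ) (hq : IsPrimitiveRoot q ℓ)
    (hδ : IsDeRham K q n δ) :
    LinearMap.range δ ≤ Submodule.span K (mon q '' (good n ℓ)ᶜ) := by
  rw [LinearMap.range_eq_map, ← span_mon, Submodule.map_span, Submodule.span_le]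
  rintro _ ⟨_, ⟨m, rfl⟩, rfl⟩
  by_cases hm : m ∈ good n ℓ
  · rw [delta_good hℓ hodd hq hδ _ (Submodule.subset_span ⟨m, hm, rfl⟩)]
    exact zero_mem _
  · refine Submodule.span_mono ?_ (delta_E_same hδ _ (List.nodup_finRange n) m)
    rintro _ ⟨m', h1, -, rfl⟩
    refine ⟨m', ?_, rfl⟩
    intro hg
    apply hm
    intro i
    rw [← h1 i]
    exact hg i

lemma split_cocycle (hℓ : 1 < ℓ) (hodd : Odd ℓ) (hq : IsPrimitiveRoot q ℓ) (hq0 : q ≠ 0)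
    (hδ : IsDeRham K q n δ) (S : Set (Fin n → ℕ × Bool)) (z : OmegaAlg K q n)
    (hz : z ∈ Submodule.span K (mon q '' S)) (h0 : δ z = 0) :
    ∃ g ∈ Submodule.span K (mon q '' (S ∩ good n ℓ)), z - g ∈ LinearMap.range δ := by
  rw [← Set.inter_union_compl S (good n ℓ), Set.image_union, Submodule.span_union,
    Submodule.mem_sup] at hz
  obtain ⟨g, hg, y, hy, rfl⟩ := hz
  refine ⟨g, hg, ?_⟩
  rw [add_sub_cancel_left]
  have hg0 := delta_good hℓ hodd hq hδ g
    (Submodule.span_mono (Set.image_mono Set.inter_subset_right) hg)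
  rw [map_add, hg0, zero_add] at h0
  have hy1 : y ∈ LinearMap.range δ ⊔ Submodule.span K (mon q '' idx n ℓ false) := by
    have hy2 : y ∈ Submodule.span K (mon q '' idx n ℓ true) ⊔
        Submodule.span K (mon q '' idx n ℓ false) := by
      rw [← Submodule.span_union, ← Set.image_union]
      exact Submodule.span_mono (Set.image_mono
        (Set.inter_subset_right.trans bad_subset)) hy
    exact (sup_le (idx_true_le hℓ hodd hq hq0 hδ) le_sup_right) hy2
  obtain ⟨_, ⟨u, rfl⟩, t, ht, rfl⟩ := Submodule.mem_sup.1 hy1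
  rw [map_add, delta_delta hq0 hδ, zero_add] at h0
  rw [idx_false_inj hℓ hodd hq hq0 hδ t ht h0, add_zero]
  exact ⟨u, rfl⟩

end cohomology

section cartier

variable {ℓ : ℕ}

lemma comm_X (hql : q ^ ℓ = 1) (i j : Fin n) : Commute (X K q n i) (X K q n j ^ ℓ) := by
  rcases lt_trichotomy j i with h | rfl | h
  · unfold Commute SemiconjBy
    rw [X_Xpow_gt h, hql, one_smul]
  · exact (Commute.refl _).pow_right _
  · have key : ∀ a : ℕ, X K q n j ^ a * X K q n i = q ^ a • (X K q n i * X K q n j ^ a) := by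
      intro a
      induction a with
      | zero => simp
      | succ a ih =>
        rw [pow_succ, mul_assoc, X_X h, mul_smul_comm, ← mul_assoc, ih, smul_mul_assoc, smul_smul,
          mul_assoc, pow_succ']
    unfold Commute SemiconjBy
    rw [key, hql, one_smul]

lemma comm_Y (hql : q ^ ℓ = 1) (hqi : qint q ℓ = 0) (i j : Fin n) :
    Commute (Y K q n i) (X K q n j ^ ℓ) := by
  unfold Commute SemiconjBy
  rcases lt_trichotomy j i with h | rfl | h
  · rw [Y_Xpow_lt h, hqi]; simp
  · rw [Y_Xpow_eq, hql, one_smul]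
  · rw [Y_Xpow_gt h]

lemma Xpow_blk_lt {i j : Fin n} (h : i < j) (p : ℕ × Bool) (a : ℕ) :
    X K q n j ^ a * blk q i p = q ^ (p.1 * a) • (blk q i p * X K q n j ^ a) := by
  induction a with
  | zero => simp
  | succ a ih =>
    rw [pow_succ, mul_assoc, X_blk_lt h, mul_smul_comm, ← mul_assoc, ih, smul_mul_assoc, smul_smul,
      mul_assoc, ← pow_succ, ← pow_add, mul_add_one, add_comm]

lemma cart_rel (hℓ : 1 < ℓ) (hq0 : q ≠ 0) (hql : q ^ ℓ = 1) (hqi : qint q ℓ = 0)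
    ⦃a b : FreeAlgebra K (OmegaLetter n)⦄ (h : omegaRel K 1 n a b) :
    FreeAlgebra.lift K (Sum.elim (fun i => X K q n i ^ ℓ)
      (fun i => X K q n i ^ (ℓ - 1) * Y K q n i)) a =
    FreeAlgebra.lift K (Sum.elim (fun i => X K q n i ^ ℓ)
      (fun i => X K q n i ^ (ℓ - 1) * Y K q n i)) b := by
  have hc : ∀ i j : Fin n, Commute (X K q n i ^ (ℓ - 1) * Y K q n i) (X K q n j ^ ℓ) := fun i j =>
    Commute.mul_left ((comm_X hql i j).pow_left _) (comm_Y hql hqi i j)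
  have hb : ∀ i : Fin n, X K q n i ^ (ℓ - 1) * Y K q n i = blk q i (ℓ - 1, true) := fun i => by
    simp [blk]
  induction h with
  | @xx i j h =>
    simp only [map_mul, map_smul, FreeAlgebra.lift_ι_apply, Sum.elim_inl, one_smul]
    exact ((comm_X hql i j).pow_left _).eq
  | @yx_gt i j h =>
    simp only [map_mul, FreeAlgebra.lift_ι_apply, Sum.elim_inl, Sum.elim_inr]
    exact (hc j i).eq
  | yx_eq i =>
    simp only [map_mul, map_smul, FreeAlgebra.lift_ι_apply, Sum.elim_inl, Sum.elim_inr, one_smul]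
    exact (hc i i).eq
  | @yx_lt i j h =>
    simp only [map_mul, map_smul, map_add, FreeAlgebra.lift_ι_apply, Sum.elim_inl, Sum.elim_inr,
      inv_one, sub_self, zero_smul, zero_add]
    exact (hc j i).eq
  | @yy i j h =>
    simp only [map_mul, map_smul, FreeAlgebra.lift_ι_apply, Sum.elim_inr]
    have e : q ^ ((ℓ - 1) * (ℓ - 1)) = q := by
      obtain ⟨k, rfl⟩ : ∃ k, ℓ = k + 1 := ⟨ℓ - 1, by omega⟩
      rw [Nat.add_sub_cancel]
      have h1 : q ^ (k * k) * q ^ k = 1 := by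
        rw [← pow_add, show k * k + k = (k + 1) * k by ring, pow_mul, hql, one_pow]
      have h2 : q * q ^ k = 1 := by rw [← pow_succ', hql]
      exact mul_right_cancel₀ (pow_ne_zero k hq0) (h1.trans h2.symm)
    rw [hb j, mul_assoc, Y_blk_lt_true h, mul_smul_comm, ← mul_assoc, Xpow_blk_lt h,
      smul_mul_assoc, smul_smul, mul_assoc]
    simp only [e]
    congr 1
    simp [hq0]
  | ysq i =>
    simp only [map_mul, map_zero, FreeAlgebra.lift_ι_apply, Sum.elim_inr]
    rw [mul_assoc, hb, Y_blk_eq_true, mul_zero]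

/-- the Cartier map -/
noncomputable def cart (n : ℕ) (hℓ : 1 < ℓ) (hq0 : q ≠ 0) (hql : q ^ ℓ = 1)
    (hqi : qint q ℓ = 0) : OmegaAlg K 1 n →ₐ[K] OmegaAlg K q n :=
  RingQuot.liftAlgHom K ⟨_, cart_rel hℓ hq0 hql hqi⟩

lemma cart_X (hℓ : 1 < ℓ) (hq0 : q ≠ 0) (hql : q ^ ℓ = 1)
    (hqi : qint q ℓ = 0) (i : Fin n) :
    cart n hℓ hq0 hql hqi (X K 1 n i) = X K q n i ^ ℓ := by
  unfold cart
  rw [X, gen, RingQuot.liftAlgHom_mkAlgHom_apply, FreeAlgebra.lift_ι_apply]; rfl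

lemma cart_Y (hℓ : 1 < ℓ) (hq0 : q ≠ 0) (hql : q ^ ℓ = 1)
    (hqi : qint q ℓ = 0) (i : Fin n) :
    cart n hℓ hq0 hql hqi (Y K 1 n i) = X K q n i ^ (ℓ - 1) * Y K q n i := by
  unfold cart
  rw [Y, gen, RingQuot.liftAlgHom_mkAlgHom_apply, FreeAlgebra.lift_ι_apply]; rfl

/-- effect on exponents -/
def phi (ℓ : ℕ) (p : ℕ × Bool) : ℕ × Bool := (ℓ * p.1 + (ℓ - 1) * p.2.toNat, p.2)

lemma wt_phi (hℓ : 1 < ℓ) (p : ℕ × Bool) : wt (phi ℓ p) = wt p * ℓ := by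
  rcases p with ⟨a, _ | _⟩
  · simp [wt, phi, mul_comm]
  · simp only [wt, phi, Bool.toNat_true, mul_one, add_mul, one_mul, mul_comm a ℓ]; omega

lemma phi_inj (hℓ : 1 < ℓ) : Function.Injective (phi ℓ) := by
  rintro ⟨a, b⟩ ⟨a', b'⟩ h
  simp only [phi, Prod.mk.injEq] at h
  obtain ⟨h1, rfl⟩ := h
  have := Nat.eq_of_mul_eq_mul_left (by omega) (Nat.add_right_cancel h1)
  rw [this]

lemma phi_surj (hℓ : 1 < ℓ) (p : ℕ × Bool) (hp : ℓ ∣ wt p) : ∃ p', phi ℓ p' = p := by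
  obtain ⟨c, hc⟩ := hp
  rcases p with ⟨a, _ | _⟩
  · refine ⟨(c, false), ?_⟩
    simp only [wt, Bool.toNat_false, add_zero] at hc
    simp [phi, hc]
  · simp only [wt, Bool.toNat_true] at hc
    rcases c with _ | c
    · omega
    · refine ⟨(c, true), ?_⟩
      simp only [phi, Bool.toNat_true, mul_one, Prod.mk.injEq, and_true]
      rw [mul_add_one] at hc
      omega

lemma cart_blk (hℓ : 1 < ℓ) (hq0 : q ≠ 0) (hql : q ^ ℓ = 1)
    (hqi : qint q ℓ = 0) (i : Fin n) (p : ℕ × Bool) :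
    cart n hℓ hq0 hql hqi (blk 1 i p) = blk q i (phi ℓ p) := by
  rcases p with ⟨a, _ | _⟩
  · simp [blk, phi, cart_X, pow_mul]
  · simp [blk, phi, cart_X, cart_Y, pow_mul, pow_add, mul_assoc]

lemma cart_mon (hℓ : 1 < ℓ) (hq0 : q ≠ 0) (hql : q ^ ℓ = 1)
    (hqi : qint q ℓ = 0) (m : Fin n → ℕ × Bool) :
    cart n hℓ hq0 hql hqi (mon 1 m) = mon q (fun i => phi ℓ (m i)) := by
  simp only [mon, E, map_list_prod, List.map_map]
  congr 1
  refine List.map_congr_left fun i _ => ?_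
  exact cart_blk hℓ hq0 hql hqi i (m i)

lemma cart_injective (hℓ : 1 < ℓ) (hq0 : q ≠ 0) (hql : q ^ ℓ = 1)
    (hqi : qint q ℓ = 0) (a : OmegaAlg K 1 n) (ha : cart n hℓ hq0 hql hqi a = 0) : a = 0 := by
  have h : a ∈ Submodule.span K (Set.range (mon (1 : K) (n := n))) := by
    rw [span_mon]; trivial
  obtain ⟨f, rfl⟩ := Finsupp.mem_span_range_iff_exists_finsupp.1 h
  have hinj : Function.Injective (fun (m : Fin n → ℕ × Bool) i => phi ℓ (m i)) := by
    intro m m' hm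
    funext i
    exact phi_inj hℓ (congrFun hm i)
  have hli := (mon_linearIndependent (n := n) hq0).comp _ hinj
  rw [linearIndependent_iff] at hli
  have : f = 0 := by
    apply hli
    rw [Finsupp.linearCombination_apply]
    simp only [Finsupp.sum, map_sum, map_smul, cart_mon] at ha ⊢
    exact ha
  rw [this]; simp

lemma cart_good (hℓ : 1 < ℓ) (hq0 : q ≠ 0) (hql : q ^ ℓ = 1)
    (hqi : qint q ℓ = 0) (a : OmegaAlg K 1 n) :
    cart n hℓ hq0 hql hqi a ∈ Submodule.span K (mon q '' good n ℓ) := by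
  have h : a ∈ Submodule.span K (Set.range (mon (1 : K) (n := n))) := by
    rw [span_mon]; trivial
  have h2 : Submodule.span K (Set.range (mon (1 : K) (n := n))) ≤
      (Submodule.span K (mon q '' good n ℓ)).comap (cart n hℓ hq0 hql hqi).toLinearMap := by
    rw [Submodule.span_le]
    rintro _ ⟨m, rfl⟩
    rw [SetLike.mem_coe, Submodule.mem_comap, AlgHom.toLinearMap_apply]
    rw [cart_mon]
    exact Submodule.subset_span ⟨_, fun i => by rw [wt_phi hℓ]; exact dvd_mul_left _ _, rfl⟩
  exact h2 h

lemma cart_piece (hℓ : 1 < ℓ) (hq0 : q ≠ 0) (hql : q ^ ℓ = 1)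
    (hqi : qint q ℓ = 0) (i d : ℕ) (a : OmegaAlg K 1 n) (ha : a ∈ piece K 1 n i d) :
    cart n hℓ hq0 hql hqi a ∈ piece K q n i (d * ℓ) := by
  have h := piece_le_mons i d ha
  rw [mons_eq] at h
  have h2 : Submodule.span K (mon (1 : K) '' {m : Fin n → ℕ × Bool |
      ∑ i, (m i).2.toNat = i ∧ ∑ i, wt (m i) = d}) ≤
      (piece K q n i (d * ℓ)).comap (cart n hℓ hq0 hql hqi).toLinearMap := by
    rw [Submodule.span_le]
    rintro _ ⟨m, ⟨rfl, rfl⟩, rfl⟩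
    rw [SetLike.mem_coe, Submodule.mem_comap, AlgHom.toLinearMap_apply]
    rw [cart_mon]
    have := mon_mem_piece (q := q) (fun i => phi ℓ (m i))
    simp only [wt_phi hℓ] at this
    rwa [← Finset.sum_mul] at this
  exact h2 h

lemma good_le_cart (hℓ : 1 < ℓ) (hq0 : q ≠ 0) (hql : q ^ ℓ = 1)
    (hqi : qint q ℓ = 0) (i d : ℕ) :
    Submodule.span K (mon q '' ({m : Fin n → ℕ × Bool |
      ∑ i, (m i).2.toNat = i ∧ ∑ i, wt (m i) = d * ℓ} ∩ good n ℓ)) ≤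
      (piece K 1 n i d).map (cart n hℓ hq0 hql hqi).toLinearMap := by
  rw [Submodule.span_le]
  rintro _ ⟨m, ⟨⟨h1, h2⟩, hg⟩, rfl⟩
  choose m' hm' using fun i => phi_surj hℓ (m i) (hg i)
  have hmm : m = fun i => phi ℓ (m' i) := funext fun i => (hm' i).symm
  subst hmm
  refine ⟨mon 1 m', ?_, cart_mon hℓ hq0 hql hqi m'⟩
  have h3 := mon_mem_piece (q := (1 : K)) m'
  simp only [wt_phi hℓ] at h2
  rw [← Finset.sum_mul] at h2
  have h4 := Nat.eq_of_mul_eq_mul_right (by omega) h2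
  rw [h4] at h3
  have h5 : ∑ i, (m' i).2.toNat = i := h1
  rw [h5] at h3
  exact h3

end cartier

end

end QC

/-- **quantum Cartier isomorphism.** Let `q` be a primitive `ℓ`-th root
of unity, `ℓ > 1` odd. The map sending `e_i ⊗ 1 ↦ [e_i^ℓ ⊗ 1]` and
`1 ⊗ e_i ↦ [e_i^{ℓ−1} ⊗ e_i]` defines an isomorphism of bigraded algebras from the
classical algebra `S(V_n) ⊗ Λ(V_n)` (the case `q = 1`) onto the cohomology
`H•(Ω(n))` of the quantum de Rham complex: there is a `K`-linear map `c` from the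
classical algebra to `Ω(n)` sending the generators as above, landing in cocycles,
multiplicative modulo coboundaries, bidegree-preserving (multiplying the polynomial
degree by `ℓ`), inducing an injection and a surjection onto cohomology; moreover the
cohomology vanishes in polynomial degrees not divisible by `ℓ`. -/
theorem stmt14 (K : Type*) [Field K] (q : K) (ℓ : ℕ) (hℓ : 1 < ℓ) (hodd : Odd ℓ)
    (hq : IsPrimitiveRoot q ℓ) (n : ℕ)
    (δ : OmegaAlg K q n →ₗ[K] OmegaAlg K q n) (hδ : OmegaAlg.IsDeRham K q n δ) :
    ∃ c : OmegaAlg K 1 n →ₗ[K] OmegaAlg K q n,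
      c 1 = 1 ∧
      (∀ i : Fin n, c (OmegaAlg.X K 1 n i) = OmegaAlg.X K q n i ^ ℓ) ∧
      (∀ i : Fin n, c (OmegaAlg.Y K 1 n i) =
          OmegaAlg.X K q n i ^ (ℓ - 1) * OmegaAlg.Y K q n i) ∧
      (∀ a : OmegaAlg K 1 n, δ (c a) = 0) ∧
      (∀ a b : OmegaAlg K 1 n, c (a * b) - c a * c b ∈ LinearMap.range δ) ∧
      (∀ i d : ℕ, ∀ a ∈ OmegaAlg.piece K 1 n i d,
          c a ∈ OmegaAlg.piece K q n i (d * ℓ)) ∧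
      (∀ i d : ℕ, ∀ a ∈ OmegaAlg.piece K 1 n i d,
          c a ∈ LinearMap.range δ → a = 0) ∧
      (∀ i d : ℕ, ∀ z ∈ OmegaAlg.piece K q n i (d * ℓ), δ z = 0 →
          ∃ a ∈ OmegaAlg.piece K 1 n i d, z - c a ∈ LinearMap.range δ) ∧
      (∀ i d : ℕ, ¬ (ℓ ∣ d) → ∀ z ∈ OmegaAlg.piece K q n i d, δ z = 0 →
          z ∈ LinearMap.range δ) := by
  have hq0 : q ≠ 0 := hq.ne_zero (by omega)
  have hql : q ^ ℓ = 1 := hq.pow_eq_one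
  have hqi : QC.qint q ℓ = 0 := (QC.qint_eq_zero hℓ hodd hq ℓ).2 dvd_rfl
  refine ⟨(QC.cart n hℓ hq0 hql hqi).toLinearMap, ?_, ?_, ?_, ?_, ?_, ?_, ?_, ?_, ?_⟩
  · exact map_one (QC.cart n hℓ hq0 hql hqi)
  · exact QC.cart_X hℓ hq0 hql hqi
  · exact QC.cart_Y hℓ hq0 hql hqi
  · exact fun a => QC.delta_good hℓ hodd hq hδ _ (QC.cart_good hℓ hq0 hql hqi a)
  · intro a b
    simp only [AlgHom.toLinearMap_apply, map_mul, sub_self]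
    exact zero_mem _
  · exact fun i d a ha => QC.cart_piece hℓ hq0 hql hqi i d a ha
  · intro i d a _ hr
    apply QC.cart_injective hℓ hq0 hql hqi
    have h1 := QC.cart_good hℓ hq0 hql hqi a
    have h2 := QC.range_le_bad hℓ hodd hq hδ hr
    exact Submodule.disjoint_def.1 ((QC.mon_linearIndependent hq0).disjoint_span_image
      disjoint_compl_right) _ h1 h2
  · intro i d z hz h0
    have hz' := QC.piece_le_mons i _ hz
    rw [QC.mons_eq] at hz'
    obtain ⟨g, hg, hr⟩ := QC.split_cocycle hℓ hodd hq hq0 hδ _ z hz' h0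
    obtain ⟨a, ha, rfl⟩ := QC.good_le_cart hℓ hq0 hql hqi i d hg
    exact ⟨a, ha, hr⟩
  · intro i d hd z hz h0
    have hz' := QC.piece_le_mons i _ hz
    rw [QC.mons_eq] at hz'
    obtain ⟨g, hg, hr⟩ := QC.split_cocycle hℓ hodd hq hq0 hδ _ z hz' h0
    have he : ({m : Fin n → ℕ × Bool | ∑ i, (m i).2.toNat = i ∧ ∑ i, QC.wt (m i) = d} ∩
        QC.good n ℓ) = ∅ := by
      ext m
      simp only [Set.mem_inter_iff, Set.mem_empty_iff_false, iff_false]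
      rintro ⟨⟨-, h2⟩, hg⟩
      exact hd (h2 ▸ Finset.dvd_sum fun i _ => hg i)
    rw [he, Set.image_empty, Submodule.span_empty, Submodule.mem_bot] at hg
    rwa [hg, sub_zero] at hr
end
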